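/- arXiv:math/0111074 — 4 statements merged into one kernel-verified Lean document; each statement's English description precedes it below -/
import Mathlib

section
/- Let (V, η) be a 2m-dimensional real symplectic vector space, and let L : Λ^k(V*) → Λ^{k+2}(V*) be wedging with η. Then for every 0 ≤ k ≤ m, the map L^k : Λ^{m-k}(V*) → Λ^{m+k}(V*) is an isomorphism. -/
/-!
Since `dim Λ^(m-k) = dim Λ^(m+k)`, it suffices that `α ↦ η^k * α` is injective on `Λ^(m-k)`
(`η` is even, hence central). This goes by induction on the degree `j = m - k`, using contraction
`d⌋` with a vector `d`. Contraction satisfies `d⌋(η * α) = (d⌋η) * α + η * (d⌋α)`, whence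
`η * d⌋(η^k * α) = k • (d⌋η) * (η^k * α) + η^(k+1) * (d⌋α)`
(`HardLefschetz.mul_contract_pow_mul`). So `η^k * α = 0` forces `η^(k+1) * (d⌋α) = 0`, and by
induction `d⌋α = 0` for every `d`. In positive degree this gives `α = 0` by Euler's identity
`∑ i, e i ∧ (e^i⌋α) = j • α` (`HardLefschetz.euler`); in degree `0` the element `α` is a scalar,
and the claim is the hypothesis `η^m ≠ 0`.
-/

set_option synthInstance.maxHeartbeats 1000000
set_option maxHeartbeats 1000000

open Module

namespace HardLefschetz

open CliffordAlgebra (contractLeft contractLeft_ι_mul)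

variable {W : Type*} [AddCommGroup W] [Module ℝ W]

/-- Contraction of exterior forms with a linear functional on `W`: the left contraction of the
Clifford algebra of the zero quadratic form. -/
noncomputable def contract (d : Dual ℝ W) : ExteriorAlgebra ℝ W →ₗ[ℝ] ExteriorAlgebra ℝ W :=
  contractLeft (Q := (0 : QuadraticForm ℝ W)) d

lemma contract_ι_mul (d : Dual ℝ W) (a : W) (b : ExteriorAlgebra ℝ W) :
    contract d (ExteriorAlgebra.ι ℝ a * b) = d a • b - ExteriorAlgebra.ι ℝ a * contract d b :=
  contractLeft_ι_mul d a b

lemma contract_ι (d : Dual ℝ W) (a : W) :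
    contract d (ExteriorAlgebra.ι ℝ a) = algebraMap ℝ _ (d a) :=
  CliffordAlgebra.contractLeft_ι (Q := (0 : QuadraticForm ℝ W)) d a

lemma contract_algebraMap (d : Dual ℝ W) (r : ℝ) :
    contract d (algebraMap ℝ (ExteriorAlgebra ℝ W) r) = 0 :=
  CliffordAlgebra.contractLeft_algebraMap (Q := (0 : QuadraticForm ℝ W)) d r

lemma ι_mul_ι_swap (a b : W) :
    ExteriorAlgebra.ι ℝ a * ExteriorAlgebra.ι ℝ b
      = -(ExteriorAlgebra.ι ℝ b * ExteriorAlgebra.ι ℝ a) :=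
  eq_neg_of_add_eq_zero_left (ExteriorAlgebra.ι_add_mul_swap a b)

/-- Elements of `Λ²` are sums of products of two vectors. -/
lemma two_induction {p : ExteriorAlgebra ℝ W → Prop}
    (hmul : ∀ a b : W, p (ExteriorAlgebra.ι ℝ a * ExteriorAlgebra.ι ℝ b))
    (hadd : ∀ x y, p x → p y → p (x + y)) {η : ExteriorAlgebra ℝ W} (hη : η ∈ ⋀[ℝ]^2 W) : p η := by
  have hη' : η ∈ LinearMap.range (ExteriorAlgebra.ι ℝ : W →ₗ[ℝ] _) *
      LinearMap.range (ExteriorAlgebra.ι ℝ : W →ₗ[ℝ] _) := by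
    rw [← pow_two]; exact hη
  induction hη' using Submodule.mul_induction_on' with
  | mem_mul_mem x hx y hy =>
    obtain ⟨a, rfl⟩ := hx
    obtain ⟨b, rfl⟩ := hy
    exact hmul a b
  | add x hx y hy h1 h2 =>
    exact hadd x y (h1 (by rw [← pow_two] at hx; exact hx)) (h2 (by rw [← pow_two] at hy; exact hy))

/-- Even forms are central; here for degree `2`. -/
lemma commute_of_two {η : ExteriorAlgebra ℝ W} (hη : η ∈ ⋀[ℝ]^2 W) (x : ExteriorAlgebra ℝ W) :
    Commute η x := by
  refine two_induction (p := fun η => Commute η x) (fun a b => ?_)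
    (fun _ _ h1 h2 => h1.add_left h2) hη
  induction x using ExteriorAlgebra.induction with
  | algebraMap r => exact (Algebra.commutes r _).symm
  | ι c =>
    change _ * _ = _ * _
    rw [mul_assoc, ι_mul_ι_swap b c, mul_neg, ← mul_assoc, ι_mul_ι_swap a c, neg_mul, neg_neg,
      mul_assoc]
  | mul x y hx hy => exact hx.mul_right hy
  | add x y hx hy => exact hx.add_right hy

/-- Contraction is an antiderivation; past a form of even degree there is no sign. -/
lemma contract_two_mul (d : Dual ℝ W) {η : ExteriorAlgebra ℝ W} (hη : η ∈ ⋀[ℝ]^2 W)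
    (x : ExteriorAlgebra ℝ W) :
    contract d (η * x) = contract d η * x + η * contract d x := by
  refine two_induction (p := fun η => contract d (η * x) = contract d η * x + η * contract d x)
    (fun a b => ?_) (fun y z h1 h2 => ?_) hη
  · rw [mul_assoc, contract_ι_mul, contract_ι_mul, contract_ι_mul, contract_ι]
    simp only [mul_sub, sub_mul, smul_mul_assoc, mul_smul_comm, Algebra.algebraMap_eq_smul_one,
      mul_one, mul_assoc]
    abel
  · rw [add_mul, map_add, map_add, h1, h2, add_mul, add_mul]
    abel

/-- The Leibniz rule for `η^k * x`, multiplied by one more `η` so that both factors `η^k * x` and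
`η^(k+1)` appear. -/
lemma mul_contract_pow_mul (d : Dual ℝ W) {η : ExteriorAlgebra ℝ W} (hη : η ∈ ⋀[ℝ]^2 W)
    (x : ExteriorAlgebra ℝ W) (k : ℕ) :
    η * contract d (η ^ k * x) = k • (contract d η * (η ^ k * x)) + η ^ (k + 1) * contract d x := by
  induction k with
  | zero => simp
  | succ k ih =>
    have hc := commute_of_two hη (contract d η)
    rw [pow_succ' η k, mul_assoc, contract_two_mul d hη, ih, mul_add, mul_add, ← mul_assoc η,
      hc.eq, succ_nsmul, mul_smul_comm, ← mul_assoc η (contract d η), hc.eq, pow_succ' η (k + 1)]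
    simp only [mul_assoc]
    abel

lemma contract_mem (d : Dual ℝ W) (j : ℕ) : ∀ x ∈ ⋀[ℝ]^(j + 1) W, contract d x ∈ ⋀[ℝ]^j W := by
  induction j with
  | zero =>
    intro x hx
    rw [ExteriorAlgebra.exteriorPower, pow_one] at hx
    obtain ⟨a, rfl⟩ := hx
    rw [contract_ι, ExteriorAlgebra.exteriorPower, pow_zero]
    exact Submodule.algebraMap_mem _
  | succ j ih =>
    intro x hx
    rw [ExteriorAlgebra.exteriorPower, pow_succ'] at hx
    induction hx using Submodule.mul_induction_on' with
    | mem_mul_mem a ha y hy =>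
      obtain ⟨a, rfl⟩ := ha
      rw [contract_ι_mul]
      refine Submodule.sub_mem _ (Submodule.smul_mem _ _ hy) ?_
      rw [ExteriorAlgebra.exteriorPower, pow_succ']
      exact Submodule.mul_mem_mul ⟨a, rfl⟩ (ih y hy)
    | add x _ y _ h1 h2 => rw [map_add]; exact Submodule.add_mem _ h1 h2

/-- Euler's identity for the number operator on exterior forms. -/
lemma euler {ι : Type*} [Fintype ι] (b : Basis ι ℝ W) (j : ℕ) :
    ∀ x ∈ ⋀[ℝ]^j W, ∑ i, ExteriorAlgebra.ι ℝ (b i) * contract (b.coord i) x = (j : ℝ) • x := by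
  induction j with
  | zero =>
    intro x hx
    rw [ExteriorAlgebra.exteriorPower, pow_zero] at hx
    obtain ⟨r, rfl⟩ := Submodule.mem_one.mp hx
    simp [contract_algebraMap]
  | succ j ih =>
    intro x hx
    rw [ExteriorAlgebra.exteriorPower, pow_succ'] at hx
    induction hx using Submodule.mul_induction_on' with
    | mem_mul_mem a ha y hy =>
      obtain ⟨a, rfl⟩ := ha
      have h1 : ∑ i, b.coord i a • ExteriorAlgebra.ι ℝ (b i) = ExteriorAlgebra.ι ℝ a := by
        conv_rhs => rw [← b.sum_repr a, map_sum]
        simp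
      have h2 : ∀ i, ExteriorAlgebra.ι ℝ (b i) *
          contract (b.coord i) (ExteriorAlgebra.ι ℝ a * y) =
          (b.coord i a • ExteriorAlgebra.ι ℝ (b i)) * y +
          ExteriorAlgebra.ι ℝ a * (ExteriorAlgebra.ι ℝ (b i) * contract (b.coord i) y) := by
        intro i
        rw [contract_ι_mul, mul_sub, ← mul_assoc, ι_mul_ι_swap (b i) a, neg_mul, sub_neg_eq_add,
          mul_smul_comm, smul_mul_assoc, mul_assoc]
      simp only [h2]
      rw [Finset.sum_add_distrib, ← Finset.sum_mul, h1, ← Finset.mul_sum, ih y hy]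
      push_cast
      rw [mul_smul_comm, add_smul, one_smul, add_comm]
    | add x _ y _ h1 h2 =>
      simp only [map_add, mul_add, Finset.sum_add_distrib, h1, h2, smul_add]

/-- Injectivity of `η^k` on `Λ^j` when `η^(j+k) ≠ 0`, by induction on `j`: contraction lowers `j`
and raises `k` by one. -/
theorem eq_zero_of_pow_mul_eq_zero [FiniteDimensional ℝ W] {η : ExteriorAlgebra ℝ W}
    (hη : η ∈ ⋀[ℝ]^2 W) (j : ℕ) : ∀ k : ℕ, η ^ (j + k) ≠ 0 →
    ∀ x ∈ ⋀[ℝ]^j W, η ^ k * x = 0 → x = 0 := by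
  induction j with
  | zero =>
    intro k hnd x hx h
    rw [ExteriorAlgebra.exteriorPower, pow_zero] at hx
    obtain ⟨r, rfl⟩ := Submodule.mem_one.mp hx
    rw [zero_add] at hnd
    rw [Algebra.algebraMap_eq_smul_one, mul_smul_comm, mul_one] at h
    rw [(smul_eq_zero.mp h).resolve_right hnd, map_zero]
  | succ j ih =>
    intro k hnd x hx h
    have hd : ∀ d : Dual ℝ W, contract d x = 0 := by
      intro d
      refine ih (k + 1) (by rwa [add_right_comm, add_assoc] at hnd) _ (contract_mem d j x hx) ?_
      have := mul_contract_pow_mul d hη x k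
      simpa [h] using this.symm
    have he := euler (Module.finBasis ℝ W) (j + 1) x hx
    simp only [hd, mul_zero, Finset.sum_const_zero] at he
    exact (smul_eq_zero.mp he.symm).resolve_left (by positivity)

end HardLefschetz

/-- Let `(V, η)` be a `2m`-dimensional real symplectic vector space, i.e.
`η ∈ Λ²(V*)` with `η^m ≠ 0` (products taken in the exterior algebra of the dual space).
Let `L : Λ^k(V*) → Λ^{k+2}(V*)` be wedging with `η`.  Then for every `0 ≤ k ≤ m` the map
`L^k : Λ^{m-k}(V*) → Λ^{m+k}(V*)`, `α ↦ α ∧ η^k`, is an isomorphism. -/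
theorem symplectic_hard_lefschetz_linear (V : Type*) [AddCommGroup V] [Module ℝ V]
    [FiniteDimensional ℝ V] (m : ℕ) (hdim : finrank ℝ V = 2 * m)
    (η : ExteriorAlgebra ℝ (Module.Dual ℝ V)) (hη : η ∈ ⋀[ℝ]^2 (Module.Dual ℝ V))
    (hnd : η ^ m ≠ (0 : ExteriorAlgebra ℝ (Module.Dual ℝ V))) (k : ℕ) (hk : k ≤ m) :
    ∃ e : (⋀[ℝ]^(m - k) (Module.Dual ℝ V)) ≃ₗ[ℝ] (⋀[ℝ]^(m + k) (Module.Dual ℝ V)),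
      ∀ α : ⋀[ℝ]^(m - k) (Module.Dual ℝ V),
        (e α : ExteriorAlgebra ℝ (Module.Dual ℝ V)) = (α : ExteriorAlgebra ℝ (Module.Dual ℝ V)) * η ^ k := by

  have hpow : η ^ k ∈ ⋀[ℝ]^(2 * k) (Module.Dual ℝ V) := by
    rw [ExteriorAlgebra.exteriorPower, pow_mul]
    exact Submodule.pow_mem_pow _ hη k
  have hmaps : ∀ x ∈ ⋀[ℝ]^(m - k) (Module.Dual ℝ V),
      LinearMap.mulRight ℝ (η ^ k) x ∈ ⋀[ℝ]^(m + k) (Module.Dual ℝ V) := by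
    intro x hx
    rw [show m + k = (m - k) + 2 * k by omega, ExteriorAlgebra.exteriorPower, pow_add]
    exact Submodule.mul_mem_mul hx hpow
  have hinj : Function.Injective ((LinearMap.mulRight ℝ (η ^ k)).restrict hmaps) := by
    rw [injective_iff_map_eq_zero]
    intro x hx
    have hx' : (x : ExteriorAlgebra ℝ (Module.Dual ℝ V)) * η ^ k = 0 := congrArg Subtype.val hx
    rw [← ((HardLefschetz.commute_of_two hη _).pow_left k).eq] at hx'
    exact Subtype.ext (HardLefschetz.eq_zero_of_pow_mul_eq_zero hη (m - k) k
      (by rwa [Nat.sub_add_cancel hk]) _ x.2 hx')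
  have hrank : finrank ℝ (⋀[ℝ]^(m - k) (Module.Dual ℝ V)) =
      finrank ℝ (⋀[ℝ]^(m + k) (Module.Dual ℝ V)) := by
    rw [exteriorPower.finrank_eq, exteriorPower.finrank_eq, Subspace.dual_finrank_eq, hdim]
    exact Nat.choose_symm_of_eq_add (by omega)
  exact ⟨LinearEquiv.ofInjectiveOfFinrankEq _ hinj hrank, fun α => rfl⟩
end

section
/- Let (V, η) be a 2m-dimensional real symplectic vector space and let * : Λ^k(V*) → Λ^{2m-k}(V*) be the symplectic star operator defined by β ∧ (*α) = Λ^k(Π)(β, α) · η^m/m! for all k-forms α, β, where Π is the bivector dual to η. Then ** = identity on Λ^k(V*) for every k. -/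
/-!
Write `i(u)` for the interior product by `u ∈ V`. By the expansion of a determinant along its first
row or column, `i(u)` is, up to sign, adjoint to `i(u)η ∧ ·` for the pairings `Λ^k(Π)`
(`P_flat_left`, `P_flat_right`). The wedge pairing `Λ^k × Λ^{2m-k} → Λ^{2m}` is nondegenerate
(`eq_zero_of_mul`, a consequence of the relation `i(u)(ξ ∧ x) = ξ(u) x - ξ ∧ i(u)x` and of Euler's
identity), so `*α` is determined by its products with `k`-forms. Hence `*` exchanges exterior and
interior products:

* `*(i(u)η ∧ α) = (-1)^{k+1} i(u)(*α)` for `α` of degree `k` (`S_flat_mul`);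
* `*(i(u)α) = (-1)^k i(u)η ∧ *α` for `α` of degree `k + 1` (`S_ict`).

Together they show that `**` commutes with exterior multiplication by every `1`-form
(`S_S_flat_mul`). As `1`-forms generate the exterior algebra, it remains to see `**1 = 1`, that is
`*(η^m / m!) = 1`. This is the case `p = m` of `*(η^p / p!) = η^{m-p} / (m-p)!` (`S_eta_pow`), which
is proved by induction on `p`: for dual bases `b`, `c` of `V` one has
`2η = ∑ᵢ i(cᵢ)η ∧ i(bᵢ)η`, so `*(η ∧ α) = -½ ∑ᵢ i(cᵢ) i(bᵢ) (*α)`, and the right-hand side is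
computed on powers of `η` from `i(u) η^{p+1} = (p+1) i(u)η ∧ η^p`.
-/

set_option synthInstance.maxHeartbeats 1000000
set_option maxHeartbeats 1000000

open Module

/-- The data of a `2m`-dimensional real symplectic vector space `(V, η)` together with its
symplectic star operator, following Libermann and Brylinski.

* `form` is the symplectic bilinear form `η` on `V` (alternating and nondegenerate);
  `form v : V →ₗ[ℝ] ℝ` is the musical isomorphism `v ↦ i(v)η : V → V*`.
* `eta` is `η` regarded as an element of `Λ²(V*)` inside the exterior algebra of the dual;
  it is characterized among `2`-forms by `eta_dual`, and `eta_pow` says `η^m ≠ 0`.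
* `P k` is the pairing `Λ^k(Π)` of `k`-forms induced by the Poisson bivector `Π` dual
  to `η`; on decomposable forms it is given by the determinant formula `P_det`
  (note `Π(i(u)η, i(v)η) = -η(u,v)`).
* `S` is the symplectic star operator `* : Λ^k(V*) → Λ^{2m-k}(V*)` (assembled into a single
  linear endomorphism of the exterior algebra, `S_grade`), defined by requiring
  `β ∧ (*α) = Λ^k(Π)(β, α) · η^m / m!` for all `k`-forms `α, β` (`S_def`). -/
structure SymplecticStarData (m : ℕ) (V : Type) [AddCommGroup V] [Module ℝ V] where
  finite : FiniteDimensional ℝ V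
  dim : finrank ℝ V = 2 * m
  form : V →ₗ[ℝ] V →ₗ[ℝ] ℝ
  alt : ∀ v : V, form v v = 0
  nondeg : ∀ v : V, form v = 0 → v = 0
  eta : ExteriorAlgebra ℝ (Module.Dual ℝ V)
  eta_mem : eta ∈ ⋀[ℝ]^2 (Module.Dual ℝ V)
  eta_pow : eta ^ m ≠ (0 : ExteriorAlgebra ℝ (Module.Dual ℝ V))
  P : ℕ → (ExteriorAlgebra ℝ (Module.Dual ℝ V) →ₗ[ℝ]
        ExteriorAlgebra ℝ (Module.Dual ℝ V) →ₗ[ℝ] ℝ)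
  P_det : ∀ (k : ℕ) (u w : Fin k → V),
    P k (ExteriorAlgebra.ιMulti ℝ k (fun i => (form (u i) : Module.Dual ℝ V)))
        (ExteriorAlgebra.ιMulti ℝ k (fun i => (form (w i) : Module.Dual ℝ V)))
      = Matrix.det (Matrix.of fun i j => -(form (u i) (w j)))
  eta_dual : ∀ u v : V,
    P 2 eta (ExteriorAlgebra.ιMulti ℝ 2 ![(form u : Module.Dual ℝ V), (form v : Module.Dual ℝ V)])
      = form u v
  S : ExteriorAlgebra ℝ (Module.Dual ℝ V) →ₗ[ℝ] ExteriorAlgebra ℝ (Module.Dual ℝ V)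
  S_grade : ∀ (k : ℕ) (α : ⋀[ℝ]^k (Module.Dual ℝ V)),
    S (α : ExteriorAlgebra ℝ (Module.Dual ℝ V)) ∈ ⋀[ℝ]^(2 * m - k) (Module.Dual ℝ V)
  S_def : ∀ (k : ℕ) (α β : ⋀[ℝ]^k (Module.Dual ℝ V)),
    (β : ExteriorAlgebra ℝ (Module.Dual ℝ V)) * S (α : ExteriorAlgebra ℝ (Module.Dual ℝ V))
      = P k (β : ExteriorAlgebra ℝ (Module.Dual ℝ V)) (α : ExteriorAlgebra ℝ (Module.Dual ℝ V))
          • (((m.factorial : ℝ)⁻¹) • eta ^ m)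

namespace SymplecticStar

/-! ### Interior products and the wedge pairing -/

section Exterior

variable {M : Type*} [AddCommGroup M] [Module ℝ M]

/-- Interior product of a multivector by a covector: the antiderivation of the exterior algebra
extending `d`. It is the contraction of the Clifford algebra of the zero quadratic form. -/
noncomputable def con (d : Dual ℝ M) : ExteriorAlgebra ℝ M →ₗ[ℝ] ExteriorAlgebra ℝ M :=
  CliffordAlgebra.contractLeft (Q := (0 : QuadraticForm ℝ M)) d

lemma con_ι_mul (d : Dual ℝ M) (a : M) (b : ExteriorAlgebra ℝ M) :
    con d (ExteriorAlgebra.ι ℝ a * b) = d a • b - ExteriorAlgebra.ι ℝ a * con d b :=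
  CliffordAlgebra.contractLeft_ι_mul d a b

lemma con_one (d : Dual ℝ M) : con d 1 = 0 :=
  CliffordAlgebra.contractLeft_one (Q := (0 : QuadraticForm ℝ M)) d

lemma con_smul_one (d : Dual ℝ M) (r : ℝ) : con d (r • 1) = 0 := by
  rw [map_smul, con_one, smul_zero]

lemma mem_zero {x : ExteriorAlgebra ℝ M} (hx : x ∈ ⋀[ℝ]^0 M) :
    ∃ r : ℝ, x = r • 1 := by
  rw [ExteriorAlgebra.exteriorPower, pow_zero, Submodule.mem_one] at hx
  obtain ⟨r, rfl⟩ := hx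
  exact ⟨r, Algebra.algebraMap_eq_smul_one r⟩

lemma one_mem_zero : (1 : ExteriorAlgebra ℝ M) ∈ ⋀[ℝ]^0 M := by
  rw [ExteriorAlgebra.exteriorPower, pow_zero]; exact Submodule.one_le.mp le_rfl

lemma ι_mul_mem (a : M) {k : ℕ} {x : ExteriorAlgebra ℝ M} (hx : x ∈ ⋀[ℝ]^k M) :
    ExteriorAlgebra.ι ℝ a * x ∈ ⋀[ℝ]^(k + 1) M := by
  rw [ExteriorAlgebra.exteriorPower, pow_succ']
  exact Submodule.mul_mem_mul ⟨a, rfl⟩ hx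

/-- `Λ^{k+1}` is additively generated by the products of a vector with an element of `Λ^k`. -/
lemma grade_induction {k : ℕ} {C : ExteriorAlgebra ℝ M → Prop}
    (add : ∀ x y, C x → C y → C (x + y))
    (mul : ∀ a x, x ∈ ⋀[ℝ]^k M → C (ExteriorAlgebra.ι ℝ a * x))
    {x : ExteriorAlgebra ℝ M} (hx : x ∈ ⋀[ℝ]^(k + 1) M) : C x := by
  rw [ExteriorAlgebra.exteriorPower, pow_succ'] at hx
  induction hx using Submodule.mul_induction_on' with
  | mem_mul_mem m hm n hn =>
    obtain ⟨a, rfl⟩ := hm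
    exact mul a n hn
  | add x _ y _ hx hy => exact add _ _ hx hy

lemma con_mem (d : Dual ℝ M) {k : ℕ} {x : ExteriorAlgebra ℝ M} (hx : x ∈ ⋀[ℝ]^(k + 1) M) :
    con d x ∈ ⋀[ℝ]^k M := by
  induction k generalizing x with
  | zero =>
    refine grade_induction (C := fun x => con d x ∈ ⋀[ℝ]^0 M) ?_ ?_ hx
    · intro x y hx hy; rw [map_add]; exact add_mem hx hy
    · intro a x hx
      obtain ⟨r, rfl⟩ := mem_zero hx
      rw [con_ι_mul, con_smul_one, mul_zero, sub_zero]
      exact Submodule.smul_mem _ _ hx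
  | succ k ih =>
    refine grade_induction (C := fun x => con d x ∈ ⋀[ℝ]^(k + 1) M) ?_ ?_ hx
    · intro x y hx hy; rw [map_add]; exact add_mem hx hy
    · intro a x hx
      rw [con_ι_mul]
      exact sub_mem (Submodule.smul_mem _ _ hx) (ι_mul_mem a (ih hx))

lemma ι_mul_ι (a b : M) :
    ExteriorAlgebra.ι ℝ a * ExteriorAlgebra.ι ℝ b
      = -(ExteriorAlgebra.ι ℝ b * ExteriorAlgebra.ι ℝ a) :=
  eq_neg_of_add_eq_zero_left (ExteriorAlgebra.ι_add_mul_swap a b)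

/-- Graded commutation of a vector with a `k`-vector. -/
lemma mul_ι (a : M) {k : ℕ} {x : ExteriorAlgebra ℝ M} (hx : x ∈ ⋀[ℝ]^k M) :
    x * ExteriorAlgebra.ι ℝ a = (-1 : ℝ) ^ k • (ExteriorAlgebra.ι ℝ a * x) := by
  induction k generalizing x with
  | zero =>
    obtain ⟨r, rfl⟩ := mem_zero hx
    simp
  | succ k ih =>
    refine grade_induction (C := fun x => x * ExteriorAlgebra.ι ℝ a
      = (-1 : ℝ) ^ (k + 1) • (ExteriorAlgebra.ι ℝ a * x)) ?_ ?_ hx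
    · intro x y hx hy; rw [add_mul, hx, hy, mul_add, smul_add]
    · intro b x hx
      rw [mul_assoc, ih hx, mul_smul_comm, ← mul_assoc, ← mul_assoc, ι_mul_ι b a, pow_succ]
      simp

/-- The graded Leibniz rule for the interior product. -/
lemma con_mul (d : Dual ℝ M) {k : ℕ} {x : ExteriorAlgebra ℝ M} (hx : x ∈ ⋀[ℝ]^k M)
    (y : ExteriorAlgebra ℝ M) :
    con d (x * y) = con d x * y + (-1 : ℝ) ^ k • (x * con d y) := by
  induction k generalizing x with
  | zero =>
    obtain ⟨r, rfl⟩ := mem_zero hx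
    simp [con_one]
  | succ k ih =>
    refine grade_induction (C := fun x => con d (x * y)
      = con d x * y + (-1 : ℝ) ^ (k + 1) • (x * con d y)) ?_ ?_ hx
    · intro x z hx hz; rw [add_mul, map_add, hx, hz, map_add, add_mul, add_mul, smul_add]; abel
    · intro b x hx
      rw [mul_assoc, con_ι_mul, ih hx, con_ι_mul, mul_add, sub_mul, mul_smul_comm, pow_succ,
        mul_assoc, mul_assoc, smul_mul_assoc, mul_neg_one, neg_smul]
      abel

/-- Euler's identity: `∑ᵢ bᵢ ∧ i(bᵢ*)` is multiplication by the degree. -/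
lemma euler {I : Type*} [Fintype I] (b : Basis I ℝ M) {k : ℕ} {x : ExteriorAlgebra ℝ M}
    (hx : x ∈ ⋀[ℝ]^k M) :
    ∑ i, ExteriorAlgebra.ι ℝ (b i) * con (b.coord i) x = (k : ℝ) • x := by
  induction k generalizing x with
  | zero =>
    obtain ⟨r, rfl⟩ := mem_zero hx
    simp [con_one]
  | succ k ih =>
    refine grade_induction (C := fun x => ∑ i, ExteriorAlgebra.ι ℝ (b i) * con (b.coord i) x
      = ((k + 1 : ℕ) : ℝ) • x) ?_ ?_ hx
    · intro x y hx hy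
      simp only [map_add, mul_add, Finset.sum_add_distrib, hx, hy, smul_add]
    · intro a x hx
      have h1 : ∑ i, b.coord i a • ExteriorAlgebra.ι ℝ (b i) = ExteriorAlgebra.ι ℝ a := by
        simp only [← map_smul, ← map_sum, Basis.coord_apply, b.sum_repr]
      simp only [con_ι_mul, mul_sub, mul_smul_comm, ← mul_assoc, ι_mul_ι _ a,
        Finset.sum_sub_distrib, ← smul_mul_assoc]
      rw [← Finset.sum_mul, h1]
      simp only [neg_mul, Finset.sum_neg_distrib, sub_neg_eq_add, mul_assoc, ← Finset.mul_sum,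
        ih hx]
      push_cast
      rw [add_smul, one_smul, mul_smul_comm, add_comm, add_mul, smul_mul_assoc]


/-- The alternating-sum formula for the interior product of a decomposable multivector. -/
lemma con_ιMulti (d : Dual ℝ M) {k : ℕ} (f : Fin (k + 1) → M) :
    con d (ExteriorAlgebra.ιMulti ℝ (k + 1) f)
      = ∑ j : Fin (k + 1), ((-1 : ℝ) ^ (j : ℕ) * d (f j)) •
          ExteriorAlgebra.ιMulti ℝ k (fun i => f (j.succAbove i)) := by
  induction k with
  | zero => rw [ExteriorAlgebra.ιMulti_succ_apply, con_ι_mul]; simp [con_one]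
  | succ k ih =>
    rw [ExteriorAlgebra.ιMulti_succ_apply, con_ι_mul, ih, Fin.sum_univ_succ (n := k + 1),
      Finset.mul_sum,
      sub_eq_add_neg, ← Finset.sum_neg_distrib]
    congr 1
    · simp [Matrix.vecTail, Function.comp_def]
    · refine Finset.sum_congr rfl fun j _ => ?_
      rw [ExteriorAlgebra.ιMulti_succ_apply, mul_smul_comm, ← neg_smul]
      congr 1
      · simp [Matrix.vecTail, pow_succ]
      · simp [Matrix.vecTail, Function.comp_def]

variable [FiniteDimensional ℝ M]

/-- Below top degree a multivector is determined by its wedge products with vectors: applying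
`∑ᵢ i(bᵢ*) (bᵢ ∧ ·)` multiplies it by its codegree. -/
lemma eq_zero_of_ι_mul {k : ℕ} (hk : k ≠ finrank ℝ M) {x : ExteriorAlgebra ℝ M}
    (hx : x ∈ ⋀[ℝ]^k M) (h : ∀ a, ExteriorAlgebra.ι ℝ a * x = 0) : x = 0 := by
  let b := Module.finBasis ℝ M
  have h1 : ∀ i, ExteriorAlgebra.ι ℝ (b i) * con (b.coord i) x = x := by
    intro i
    have := con_ι_mul (b.coord i) (b i) x
    rw [h, map_zero] at this
    simpa using (sub_eq_zero.mp this.symm).symm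
  have h2 := euler b hx
  simp only [h1, Finset.sum_const, Finset.card_univ, Fintype.card_fin] at h2
  rw [← Nat.cast_smul_eq_nsmul ℝ, ← sub_eq_zero, ← sub_smul] at h2
  refine (smul_eq_zero.mp h2).resolve_left ?_
  exact sub_ne_zero.mpr (by exact_mod_cast hk.symm)

/-- Nondegeneracy of the wedge pairing `Λ^k × Λ^j → Λ^{k+j}` in complementary degrees. -/
lemma eq_zero_of_mul {k j : ℕ} (hkj : k + j = finrank ℝ M) {x : ExteriorAlgebra ℝ M}
    (hx : x ∈ ⋀[ℝ]^j M) (h : ∀ y ∈ ⋀[ℝ]^k M, y * x = 0) : x = 0 := by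
  induction k generalizing j x with
  | zero => simpa using h 1 one_mem_zero
  | succ k ih =>
    refine eq_zero_of_ι_mul (by omega) hx fun a => ih (j := j + 1) (by omega) (ι_mul_mem a hx) ?_
    intro y hy
    rw [← mul_assoc, mul_ι a hy, smul_mul_assoc, h _ (ι_mul_mem a hy), smul_zero]

lemma eq_zero_of_lt {k : ℕ} (hk : finrank ℝ M < k) {x : ExteriorAlgebra ℝ M}
    (hx : x ∈ ⋀[ℝ]^k M) : x = 0 := by
  rw [← ExteriorAlgebra.ιMulti_span_fixedDegree] at hx
  have : Submodule.span ℝ (Set.range (ExteriorAlgebra.ιMulti ℝ k (M := M))) ≤ ⊥ := by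
    rw [Submodule.span_le]
    rintro _ ⟨v, rfl⟩
    refine (ExteriorAlgebra.ιMulti ℝ k).map_linearDependent v fun hv => ?_
    have := hv.fintype_card_le_finrank
    simp at this
    omega
  exact (Submodule.mem_bot ℝ).mp (this hx)

end Exterior

/-! ### The symplectic star -/

section Star

variable {m : ℕ} {V : Type} [AddCommGroup V] [Module ℝ V]

/-- The interior product `i(u)` of forms by a vector `u`. -/
noncomputable def ict (u : V) : ExteriorAlgebra ℝ (Dual ℝ V) →ₗ[ℝ] ExteriorAlgebra ℝ (Dual ℝ V) :=
  con (Dual.eval ℝ V u)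

/-- The `1`-form `i(u)η` as an element of the exterior algebra. -/
noncomputable def flat (D : SymplecticStarData m V) (u : V) : ExteriorAlgebra ℝ (Dual ℝ V) :=
  ExteriorAlgebra.ι ℝ (D.form u)

variable (D : SymplecticStarData m V)

lemma ict_mem (u : V) {k : ℕ} {x : ExteriorAlgebra ℝ (Dual ℝ V)}
    (hx : x ∈ ⋀[ℝ]^(k + 1) (Dual ℝ V)) : ict u x ∈ ⋀[ℝ]^k (Dual ℝ V) :=
  con_mem _ hx

lemma flat_mul_mem (u : V) {k : ℕ} {x : ExteriorAlgebra ℝ (Dual ℝ V)}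
    (hx : x ∈ ⋀[ℝ]^k (Dual ℝ V)) : flat D u * x ∈ ⋀[ℝ]^(k + 1) (Dual ℝ V) :=
  ι_mul_mem _ hx

lemma ict_flat_mul (u w : V) (x : ExteriorAlgebra ℝ (Dual ℝ V)) :
    ict u (flat D w * x) = D.form w u • x - flat D w * ict u x :=
  con_ι_mul _ _ _

lemma form_surjective : Function.Surjective D.form := by
  have := D.finite
  refine (LinearMap.injective_iff_surjective_of_finrank_eq_finrank
    (Subspace.dual_finrank_eq (K := ℝ) (V := V)).symm).mp ?_
  rw [← LinearMap.ker_eq_bot, LinearMap.ker_eq_bot']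
  exact D.nondeg

lemma finrank_dual (D : SymplecticStarData m V) : finrank ℝ (Dual ℝ V) = 2 * m :=
  Subspace.dual_finrank_eq.trans D.dim

lemma form_swap (u v : V) : D.form u v = -D.form v u := by
  have h := D.alt (u + v)
  simp only [map_add, LinearMap.add_apply, D.alt] at h
  linarith

/-- Decomposable forms `i(u₁)η ∧ ⋯ ∧ i(u_k)η` span `Λ^k`. -/
lemma span_induction_form {k : ℕ} {C : ExteriorAlgebra ℝ (Dual ℝ V) → Prop}
    (zero : C 0) (add : ∀ x y, C x → C y → C (x + y)) (smul : ∀ (r : ℝ) x, C x → C (r • x))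
    (dec : ∀ u : Fin k → V, C (ExteriorAlgebra.ιMulti ℝ k fun i => D.form (u i)))
    {x : ExteriorAlgebra ℝ (Dual ℝ V)} (hx : x ∈ ⋀[ℝ]^k (Dual ℝ V)) : C x := by
  rw [← ExteriorAlgebra.ιMulti_span_fixedDegree] at hx
  induction hx using Submodule.span_induction with
  | mem x h =>
    obtain ⟨f, rfl⟩ := h
    choose u hu using fun i => form_surjective D (f i)
    simpa only [hu] using dec u
  | zero => exact zero
  | add x y _ _ hx hy => exact add x y hx hy
  | smul r x _ hx => exact smul r x hx

lemma flat_mul_ιMulti (u : V) {k : ℕ} (w : Fin k → V) :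
    flat D u * ExteriorAlgebra.ιMulti ℝ k (fun i => D.form (w i))
      = ExteriorAlgebra.ιMulti ℝ (k + 1)
        (fun i => D.form ((Fin.cons u w : Fin (k + 1) → V) i)) := by
  rw [ExteriorAlgebra.ιMulti_succ_apply]
  simp [flat, Matrix.vecTail, Function.comp_def]

/-- The interior product by `u` is adjoint to the exterior product by `i(u)η` on its left for the
pairing `Λ^k(Π)`: on decomposable forms this is the expansion of a determinant along its first
row. -/
lemma P_flat_left (u : V) {k : ℕ} {β α : ExteriorAlgebra ℝ (Dual ℝ V)}
    (hβ : β ∈ ⋀[ℝ]^k (Dual ℝ V)) (hα : α ∈ ⋀[ℝ]^(k + 1) (Dual ℝ V)) :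
    D.P (k + 1) (flat D u * β) α = D.P k β (ict u α) := by
  refine span_induction_form D (C := fun β => D.P (k + 1) (flat D u * β) α = D.P k β (ict u α))
    (by simp) (fun x y hx hy => by simp [mul_add, hx, hy]) (fun r x hx => by simp [hx])
    (fun w => ?_) hβ
  refine span_induction_form D (C := fun α =>
    D.P (k + 1) (flat D u * ExteriorAlgebra.ιMulti ℝ k (fun i => D.form (w i))) α
      = D.P k (ExteriorAlgebra.ιMulti ℝ k (fun i => D.form (w i))) (ict u α))
    (by simp) (fun x y hx hy => by simp [hx, hy]) (fun r x hx => by simp [hx])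
    (fun z => ?_) hα
  rw [flat_mul_ιMulti, D.P_det, Matrix.det_succ_row_zero, ict, con_ιMulti, map_sum]
  refine Finset.sum_congr rfl fun j _ => ?_
  rw [map_smul, D.P_det k w (fun i => z (j.succAbove i)), smul_eq_mul]
  congr 1
  simp [form_swap D u]

/-- Counterpart of `P_flat_left` in the other argument; the sign is the antisymmetry of `Π`. -/
lemma P_flat_right (u : V) {k : ℕ} {β α : ExteriorAlgebra ℝ (Dual ℝ V)}
    (hβ : β ∈ ⋀[ℝ]^(k + 1) (Dual ℝ V)) (hα : α ∈ ⋀[ℝ]^k (Dual ℝ V)) :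
    D.P (k + 1) β (flat D u * α) = -D.P k (ict u β) α := by
  refine span_induction_form D (C := fun α => D.P (k + 1) β (flat D u * α) = -D.P k (ict u β) α)
    (by simp) (fun x y hx hy => by simp [mul_add, hx, hy]; ring) (fun r x hx => by simp [hx])
    (fun w => ?_) hα
  refine span_induction_form D (C := fun β =>
    D.P (k + 1) β (flat D u * ExteriorAlgebra.ιMulti ℝ k (fun i => D.form (w i)))
      = -D.P k (ict u β) (ExteriorAlgebra.ιMulti ℝ k (fun i => D.form (w i))))
    (by simp) (fun x y hx hy => by simp [hx, hy]; ring) (fun r x hx => by simp [hx])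
    (fun z => ?_) hβ
  rw [flat_mul_ιMulti, D.P_det, Matrix.det_succ_column_zero, ict, con_ιMulti, map_sum,
    LinearMap.sum_apply, ← Finset.sum_neg_distrib]
  refine Finset.sum_congr rfl fun j _ => ?_
  rw [map_smul, LinearMap.smul_apply, D.P_det k (fun i => z (j.succAbove i)) w, smul_eq_mul,
    ← neg_mul]
  congr 1
  simp

lemma mul_S {k : ℕ} {β α : ExteriorAlgebra ℝ (Dual ℝ V)}
    (hβ : β ∈ ⋀[ℝ]^k (Dual ℝ V)) (hα : α ∈ ⋀[ℝ]^k (Dual ℝ V)) :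
    β * D.S α = D.P k β α • (((m.factorial : ℝ)⁻¹) • D.eta ^ m) :=
  D.S_def k ⟨α, hα⟩ ⟨β, hβ⟩

lemma S_mem {k j : ℕ} (hkj : k + j = 2 * m) {α : ExteriorAlgebra ℝ (Dual ℝ V)}
    (hα : α ∈ ⋀[ℝ]^k (Dual ℝ V)) : D.S α ∈ ⋀[ℝ]^j (Dual ℝ V) := by
  have h := D.S_grade k ⟨α, hα⟩
  rwa [show 2 * m - k = j by omega] at h

lemma eq_of_mul (D : SymplecticStarData m V) {k j : ℕ} (hkj : k + j = 2 * m) {x y : ExteriorAlgebra ℝ (Dual ℝ V)}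
    (hx : x ∈ ⋀[ℝ]^j (Dual ℝ V)) (hy : y ∈ ⋀[ℝ]^j (Dual ℝ V))
    (h : ∀ β ∈ ⋀[ℝ]^k (Dual ℝ V), β * x = β * y) : x = y := by
  have := D.finite
  refine sub_eq_zero.mp (eq_zero_of_mul (hkj.trans (finrank_dual D).symm) (sub_mem hx hy) ?_)
  intro β hβ
  rw [mul_sub, h β hβ, sub_self]

/-- The star turns exterior products into interior products: `*(i(u)η ∧ α) = (-1)^{k+1} i(u)(*α)`.
The products `β ∧ *α` with `β` of degree `k + 1` vanish, being of degree `2m + 1`, and `i(u)` is an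
antiderivation. -/
lemma S_flat_mul (u : V) {k j : ℕ} (hkj : k + 1 + j = 2 * m) {α : ExteriorAlgebra ℝ (Dual ℝ V)}
    (hα : α ∈ ⋀[ℝ]^k (Dual ℝ V)) :
    D.S (flat D u * α) = (-1 : ℝ) ^ (k + 1) • ict u (D.S α) := by
  have := D.finite
  have hS : D.S α ∈ ⋀[ℝ]^(j + 1) (Dual ℝ V) := S_mem D (by omega) hα
  refine eq_of_mul D hkj (S_mem D hkj (flat_mul_mem D _ hα))
    (Submodule.smul_mem _ _ (ict_mem _ hS)) fun β hβ => ?_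
  have h0 : β * D.S α = 0 := by
    refine eq_zero_of_lt (k := k + 1 + (j + 1)) (by rw [finrank_dual D]; omega) ?_
    rw [ExteriorAlgebra.exteriorPower, pow_add]
    exact Submodule.mul_mem_mul hβ hS
  have h1 : ict u (β * D.S α)
      = ict u β * D.S α + (-1 : ℝ) ^ (k + 1) • (β * ict u (D.S α)) := con_mul _ hβ _
  rw [h0, map_zero] at h1
  rw [mul_S D hβ (flat_mul_mem D _ hα), P_flat_right D u hβ hα, neg_smul,
    ← mul_S D (ict_mem _ hβ) hα, mul_smul_comm]
  exact (eq_neg_of_add_eq_zero_right h1.symm).symm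

/-- The star turns interior products into exterior products: `*(i(u)α) = (-1)^k i(u)η ∧ *α` for
`α` of degree `k + 1`. -/
lemma S_ict (u : V) {k j : ℕ} (hkj : k + 1 + j = 2 * m) {α : ExteriorAlgebra ℝ (Dual ℝ V)}
    (hα : α ∈ ⋀[ℝ]^(k + 1) (Dual ℝ V)) :
    D.S (ict u α) = (-1 : ℝ) ^ k • (flat D u * D.S α) := by
  have hS : D.S α ∈ ⋀[ℝ]^j (Dual ℝ V) := S_mem D (by omega) hα
  refine eq_of_mul D (k := k) (j := j + 1) (by omega) (S_mem D (by omega) (ict_mem _ hα))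
    (Submodule.smul_mem _ _ (flat_mul_mem D u hS)) fun β hβ => ?_
  rw [mul_S D hβ (ict_mem _ hα), ← P_flat_left D u hβ hα, ← mul_S D (flat_mul_mem D _ hβ) hα,
    mul_smul_comm, ← mul_assoc, flat, mul_ι _ hβ, smul_mul_assoc, smul_smul, ← mul_pow]
  simp

/-- `**` commutes with exterior multiplication by `1`-forms. -/
lemma S_S_flat_mul (u : V) {k : ℕ} (hk : k + 1 ≤ 2 * m) {α : ExteriorAlgebra ℝ (Dual ℝ V)}
    (hα : α ∈ ⋀[ℝ]^k (Dual ℝ V)) :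
    D.S (D.S (flat D u * α)) = flat D u * D.S (D.S α) := by
  obtain ⟨j, hj⟩ := Nat.exists_eq_add_of_le hk
  have hS : D.S α ∈ ⋀[ℝ]^(j + 1) (Dual ℝ V) := S_mem D (by omega) hα
  rw [S_flat_mul D u hj.symm hα, map_smul, S_ict D u (j := k) (by omega) hS, smul_smul, ← pow_add,
    Even.neg_one_pow ⟨m, by omega⟩, one_smul]

/-- The element `eta` represents the form `η`. -/
lemma ict_eta (u : V) : ict u D.eta = flat D u := by
  have h1 : ict u D.eta ∈ ⋀[ℝ]^1 (Dual ℝ V) := ict_mem _ D.eta_mem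
  have h2 := h1
  rw [ExteriorAlgebra.exteriorPower, pow_one] at h2
  obtain ⟨f, hf⟩ := h2
  obtain ⟨w, rfl⟩ := form_surjective D f
  have hw : ict u D.eta = flat D w * 1 := by rw [mul_one, flat, hf]
  rw [hw, mul_one]
  congr 1
  rw [← sub_eq_zero]
  refine D.nondeg _ (LinearMap.ext fun v => ?_)
  have h := D.eta_dual u v
  have e : ∀ a b : V, ExteriorAlgebra.ιMulti ℝ 2 ![D.form a, D.form b]
      = flat D a * (flat D b * 1) := by
    intro a b; simp [flat, ExteriorAlgebra.ιMulti_apply]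
  have m0 : (1 : ExteriorAlgebra ℝ (Dual ℝ V)) ∈ ⋀[ℝ]^0 (Dual ℝ V) := one_mem_zero
  have m1 : ∀ a : V, flat D a * 1 ∈ ⋀[ℝ]^(0 + 1) (Dual ℝ V) := fun a => flat_mul_mem D _ m0
  have p0 : D.P 0 1 1 = 1 := by
    have := D.P_det 0 Fin.elim0 Fin.elim0
    simpa using this
  rw [e, P_flat_right D u D.eta_mem (m1 v), hw, P_flat_right D v (m1 w) m0, ict_flat_mul] at h
  simp [ict, con_one, p0] at h
  simp [h]

lemma eta_pow_mem (p : ℕ) : D.eta ^ p ∈ ⋀[ℝ]^(2 * p) (Dual ℝ V) := by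
  rw [ExteriorAlgebra.exteriorPower, pow_mul]
  exact Submodule.pow_mem_pow _ D.eta_mem p

lemma eta_mul_flat (u : V) : D.eta * flat D u = flat D u * D.eta := by
  have h := mul_ι (D.form u) D.eta_mem
  rwa [neg_one_sq, one_smul] at h

lemma ict_eta_pow (u : V) (p : ℕ) :
    ict u (D.eta ^ (p + 1)) = ((p : ℝ) + 1) • (flat D u * D.eta ^ p) := by
  induction p with
  | zero => simp [ict_eta]
  | succ p ih =>
    have h : ict u (D.eta * D.eta ^ (p + 1)) = ict u D.eta * D.eta ^ (p + 1)
        + (-1 : ℝ) ^ 2 • (D.eta * ict u (D.eta ^ (p + 1))) := con_mul _ D.eta_mem _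
    rw [pow_succ', h, ih, ict_eta, mul_smul_comm, ← mul_assoc, eta_mul_flat, mul_assoc,
      ← pow_succ']
    push_cast
    module

/-- A basis `b` of `V` and its dual basis `c` for `η`, `η(cᵢ, bⱼ) = δᵢⱼ`: then
`2η = ∑ᵢ i(cᵢ)η ∧ i(bᵢ)η`, by Euler's identity applied to `η`. -/
lemma exists_dual_bases : ∃ b c : Fin (2 * m) → V, (∀ i, D.form (c i) (b i) = 1) ∧
    ∑ i, flat D (c i) * flat D (b i) = (2 : ℝ) • D.eta := by
  have := D.finite
  let b := Module.finBasisOfFinrankEq ℝ V D.dim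
  choose c hc using fun i => form_surjective D (b.coord i)
  refine ⟨b, c, fun i => by simp [hc], ?_⟩
  have h := euler b.dualBasis D.eta_mem
  have hb : ∀ i, b.dualBasis.coord i = Dual.eval ℝ V (b i) := by
    intro i; ext f; simp
  have hi : ∀ i, con (Dual.eval ℝ V (b i)) D.eta = flat D (b i) := fun i => ict_eta D (b i)
  simp only [hb, hi] at h
  rw [Nat.cast_ofNat] at h
  rw [← h]
  refine Finset.sum_congr rfl fun i _ => ?_
  rw [flat, hc]
  simp

/-- Contraction of the powers of `η` with `∑ᵢ bᵢ ∧ cᵢ`, which is proportional to `Π`: the `sl₂`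
relation between `η ∧ ·` and its adjoint, evaluated on powers of `η`. -/
lemma lambda_eta_pow {b c : Fin (2 * m) → V} (hbc : ∀ i, D.form (c i) (b i) = 1)
    (hη : ∑ i, flat D (c i) * flat D (b i) = (2 : ℝ) • D.eta) (p : ℕ) :
    ∑ i, ict (c i) (ict (b i) (D.eta ^ (p + 1)))
      = (-2 * ((p : ℝ) + 1) * (m - p)) • D.eta ^ p := by
  have hη' : ∑ i, flat D (b i) * flat D (c i) = (-2 : ℝ) • D.eta := by
    rw [neg_smul, ← hη, ← Finset.sum_neg_distrib]
    exact Finset.sum_congr rfl fun i _ => ι_mul_ι _ _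
  have h1 : ∑ i, flat D (b i) * ict (c i) (D.eta ^ p) = (-2 * (p : ℝ)) • D.eta ^ p := by
    cases p with
    | zero => simp [ict, con_one]
    | succ q =>
      simp only [ict_eta_pow, mul_smul_comm, ← mul_assoc]
      rw [← Finset.smul_sum, ← Finset.sum_mul, hη', smul_mul_assoc, ← pow_succ', smul_smul]
      push_cast
      ring_nf
  have hcb : ∀ i, D.form (b i) (c i) = -1 := fun i => by rw [form_swap, hbc]
  simp only [ict_eta_pow, map_smul, ict_flat_mul, hcb]
  rw [← Finset.smul_sum, Finset.sum_sub_distrib, h1, Finset.sum_const, Finset.card_univ,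
    Fintype.card_fin, ← Nat.cast_smul_eq_nsmul ℝ]
  push_cast
  module

/-- The star turns exterior multiplication by `η` into a double contraction: apply `S_flat_mul`
twice to each term of `2η = ∑ᵢ i(cᵢ)η ∧ i(bᵢ)η`. -/
lemma S_eta_mul {b c : Fin (2 * m) → V}
    (hη : ∑ i, flat D (c i) * flat D (b i) = (2 : ℝ) • D.eta) {k : ℕ} (hk : k + 2 ≤ 2 * m)
    {α : ExteriorAlgebra ℝ (Dual ℝ V)} (hα : α ∈ ⋀[ℝ]^k (Dual ℝ V)) :
    D.S (D.eta * α) = (-1 / 2 : ℝ) • ∑ i, ict (c i) (ict (b i) (D.S α)) := by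
  obtain ⟨j, hj⟩ := Nat.exists_eq_add_of_le hk
  have h : D.eta = (1 / 2 : ℝ) • ∑ i, flat D (c i) * flat D (b i) := by
    rw [hη, smul_smul]; norm_num
  have key : ∀ i, D.S (flat D (c i) * (flat D (b i) * α))
      = (-1 : ℝ) • ict (c i) (ict (b i) (D.S α)) := by
    intro i
    rw [S_flat_mul D (c i) (j := j) (by omega) (flat_mul_mem D _ hα),
      S_flat_mul D (b i) (j := j + 1) (by omega) hα, map_smul, smul_smul, ← pow_add,
      Odd.neg_one_pow ⟨k + 1, by omega⟩]
  rw [h, smul_mul_assoc, Finset.sum_mul]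
  simp only [mul_assoc, map_smul, map_sum, key]
  rw [← Finset.smul_sum, smul_smul]
  norm_num

lemma S_one : D.S 1 = ((m.factorial : ℝ)⁻¹) • D.eta ^ m := by
  have h := mul_S D (k := 0) one_mem_zero one_mem_zero
  have p0 : D.P 0 1 1 = 1 := by
    have := D.P_det 0 Fin.elim0 Fin.elim0
    simpa using this
  rwa [one_mul, p0, one_smul] at h

/-- `*(η^p / p!) = η^q / q!` whenever `p + q = m`. -/
lemma S_eta_pow (p q : ℕ) (hpq : p + q = m) :
    D.S (((p.factorial : ℝ)⁻¹) • D.eta ^ p) = ((q.factorial : ℝ)⁻¹) • D.eta ^ q := by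
  induction p generalizing q with
  | zero =>
    obtain rfl : q = m := by omega
    simpa using S_one D
  | succ p ih =>
    obtain ⟨b, c, hbc, hη⟩ := exists_dual_bases D
    have h := ih (q + 1) (by omega)
    rw [map_smul] at h
    have hp : (p.factorial : ℝ) ≠ 0 := by positivity
    have hq : (q.factorial : ℝ) ≠ 0 := by positivity
    have hS : D.S (D.eta ^ p)
        = ((p.factorial : ℝ) * ((q + 1).factorial : ℝ)⁻¹) • D.eta ^ (q + 1) := by
      rw [mul_smul, ← h, smul_smul, mul_inv_cancel₀ hp, one_smul]
    rw [map_smul, pow_succ', S_eta_mul D hη (by omega) (eta_pow_mem D p), hS]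
    simp only [map_smul]
    rw [← Finset.smul_sum, lambda_eta_pow D hbc hη, smul_smul, smul_smul, smul_smul]
    congr 1
    have hm : (m : ℝ) - q = p + 1 := by
      rw [← hpq]; push_cast; ring
    rw [hm, Nat.factorial_succ, Nat.factorial_succ]
    push_cast
    field_simp

/-- Normalization: `**1 = 1`, since `*1` is the volume form `η^m / m!`, whose star is `1`. -/
lemma S_S_one : D.S (D.S 1) = 1 := by
  rw [S_one, S_eta_pow D m 0 (by omega)]
  simp

lemma S_S {k : ℕ} {α : ExteriorAlgebra ℝ (Dual ℝ V)} (hα : α ∈ ⋀[ℝ]^k (Dual ℝ V)) :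
    D.S (D.S α) = α := by
  have := D.finite
  by_cases hk : k ≤ 2 * m
  swap
  · rw [eq_zero_of_lt (by rw [finrank_dual D]; omega) hα, map_zero, map_zero]
  induction k generalizing α with
  | zero =>
    obtain ⟨r, rfl⟩ := mem_zero hα
    rw [map_smul, map_smul, S_S_one]
  | succ k ih =>
    refine grade_induction (C := fun α => D.S (D.S α) = α) ?_ ?_ hα
    · intro x y hx hy; rw [map_add, map_add, hx, hy]
    · intro f x hx
      obtain ⟨u, rfl⟩ := form_surjective D f
      have h := S_S_flat_mul D u hk hx
      rwa [ih hx (by omega)] at h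

end Star

end SymplecticStar

/-- `** = id` on `Λ^k(V*)` for the symplectic star operator of a
`2m`-dimensional real symplectic vector space. -/
theorem symplectic_star_involutive (m : ℕ) (V : Type) [AddCommGroup V] [Module ℝ V]
    (D : SymplecticStarData m V) (k : ℕ) (α : ⋀[ℝ]^k (Module.Dual ℝ V)) :
    D.S (D.S (α : ExteriorAlgebra ℝ (Module.Dual ℝ V)))
      = (α : ExteriorAlgebra ℝ (Module.Dual ℝ V)) := by
  exact SymplecticStar.S_S D α.2
end

section
/- Let (V₁, η₁) and (V₂, η₂) be symplectic vector spaces with symplectic star operators *₁ and *₂, and equip V₁ × V₂ with the symplectic form p₁*η₁ + p₂*η₂ with star operator *. Then for a k₁-form α₁ on V₁ and a k₂-form α₂ on V₂, *(α₁ ⊠ α₂) = (-1)^{k₁k₂} (*₁α₁) ⊠ (*₂α₂), where α₁ ⊠ α₂ = (p₁*α₁) ∧ (p₂*α₂). -/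
/-!
Write `i_u` for the contraction with a vector `u`, and `vol = η^m / m!`. The star operator is
determined by `*1 = vol` and by the rule

  `*(i(u)η ∧ α) = (-1)^{k+1} i_u(*α)` for a `k`-form `α`,

since every covector is some `i(u)η`. The rule (`SymplecticStarData.S_succ`) holds because for a
`(k+1)`-form `β` the product `β ∧ *α` vanishes for degree reasons, so the derivation property of
`i_u` gives `β ∧ i_u(*α) = (-1)^k (i_u β) ∧ *α = (-1)^k Λ^k(Π)(i_u β, α) vol`, while Laplace
expansion gives `Λ^{k+1}(Π)(β, i(u)η ∧ α) = -Λ^k(Π)(i_u β, α)` (`SymplecticStarData.P_succ`); the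
wedge pairing between complementary degrees is nondegenerate (`eq_zero_of_wedge_eq_zero`).

On the product, `η = p₁*η₁ + p₂*η₂` (`eta_prod`), hence `vol = vol₁ ⊠ vol₂` (`vol_prod`) by the
binomial theorem. Contraction with `(u, 0)` acts on a product `x ⊠ y` only through `x`, and
contraction with `(0, u)` only through `y`. The formula therefore follows by induction on the
degree of `α₂` when `α₁ = 1` (`S_pull₂`), and then on the degree of `α₁` (`S_box`).

Both the nondegeneracy of the wedge pairing and the identification of `η` rest on Euler's identity
`∑ᵢ bᵢ ∧ i_{bⁱ} x = p • x` for `p`-forms `x` (`euler`).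
-/


set_option synthInstance.maxHeartbeats 1000000
set_option maxHeartbeats 1000000

open Module

/-! ### Contractions and the wedge product -/

section Contraction

variable {M N : Type*} [AddCommGroup M] [Module ℝ M] [AddCommGroup N] [Module ℝ N]

/-- The contraction (interior product) `i_d` on the exterior algebra, for a covector `d`. -/
noncomputable def contr (d : Dual ℝ M) : ExteriorAlgebra ℝ M →ₗ[ℝ] ExteriorAlgebra ℝ M :=
  CliffordAlgebra.contractLeft d

theorem contr_ι_mul (d : Dual ℝ M) (a : M) (x : ExteriorAlgebra ℝ M) :
    contr d (ExteriorAlgebra.ι ℝ a * x) = d a • x - ExteriorAlgebra.ι ℝ a * contr d x :=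
  CliffordAlgebra.contractLeft_ι_mul d a x

theorem contr_algebraMap (d : Dual ℝ M) (r : ℝ) :
    contr d (algebraMap ℝ (ExteriorAlgebra ℝ M) r) = 0 :=
  CliffordAlgebra.contractLeft_algebraMap _ d r

theorem contr_ι (d : Dual ℝ M) (a : M) :
    contr d (ExteriorAlgebra.ι ℝ a) = algebraMap ℝ _ (d a) :=
  CliffordAlgebra.contractLeft_ι _ d a

theorem contr_one (d : Dual ℝ M) : contr d (1 : ExteriorAlgebra ℝ M) = 0 :=
  CliffordAlgebra.contractLeft_one _ d

theorem one_mem_one : (1 : ExteriorAlgebra ℝ M) ∈ (1 : Submodule ℝ (ExteriorAlgebra ℝ M)) :=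
  Submodule.mem_one.mpr ⟨1, map_one _⟩

theorem ι_mul_mem {p : ℕ} (a : M) {x : ExteriorAlgebra ℝ M} (hx : x ∈ ⋀[ℝ]^p M) :
    ExteriorAlgebra.ι ℝ a * x ∈ ⋀[ℝ]^(p + 1) M := by
  rw [ExteriorAlgebra.exteriorPower, pow_succ']
  exact Submodule.mul_mem_mul (LinearMap.mem_range_self _ a) hx

theorem mul_ι_mem {p : ℕ} (a : M) {x : ExteriorAlgebra ℝ M} (hx : x ∈ ⋀[ℝ]^p M) :
    x * ExteriorAlgebra.ι ℝ a ∈ ⋀[ℝ]^(p + 1) M := by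
  rw [ExteriorAlgebra.exteriorPower, pow_succ]
  exact Submodule.mul_mem_mul hx (LinearMap.mem_range_self _ a)

theorem mul_mem_exteriorPower {p q : ℕ} {x y : ExteriorAlgebra ℝ M} (hx : x ∈ ⋀[ℝ]^p M)
    (hy : y ∈ ⋀[ℝ]^q M) : x * y ∈ ⋀[ℝ]^(p + q) M := by
  rw [ExteriorAlgebra.exteriorPower, pow_add]
  exact Submodule.mul_mem_mul hx hy

theorem pow_mem_exteriorPower {p : ℕ} {x : ExteriorAlgebra ℝ M} (hx : x ∈ ⋀[ℝ]^p M) (n : ℕ) :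
    x ^ n ∈ ⋀[ℝ]^(p * n) M := by
  rw [ExteriorAlgebra.exteriorPower, pow_mul]
  exact Submodule.pow_mem_pow _ hx n

theorem map_mem_exteriorPower {p : ℕ} (f : M →ₗ[ℝ] N) {x : ExteriorAlgebra ℝ M}
    (hx : x ∈ ⋀[ℝ]^p M) : ExteriorAlgebra.map f x ∈ ⋀[ℝ]^p N := by
  rw [← ExteriorAlgebra.ιMulti_span_fixedDegree] at hx
  induction hx using Submodule.span_induction with
  | mem x h =>
    obtain ⟨v, rfl⟩ := h
    rw [ExteriorAlgebra.map_apply_ιMulti]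
    exact ExteriorAlgebra.ιMulti_range ℝ p ⟨_, rfl⟩
  | zero => simp
  | add x y _ _ hx hy => rw [map_add]; exact add_mem hx hy
  | smul r x _ hx => rw [map_smul]; exact Submodule.smul_mem _ r hx

/-- Contraction kills scalars, i.e. forms of degree zero. -/
theorem contr_eq_zero (d : Dual ℝ M) {x : ExteriorAlgebra ℝ M} (hx : x ∈ ⋀[ℝ]^0 M) :
    contr d x = 0 := by
  rw [ExteriorAlgebra.exteriorPower, pow_zero] at hx
  obtain ⟨r, rfl⟩ := Submodule.mem_one.mp hx
  exact contr_algebraMap d r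

theorem contr_mem (d : Dual ℝ M) {p : ℕ} {x : ExteriorAlgebra ℝ M} (hx : x ∈ ⋀[ℝ]^(p + 1) M) :
    contr d x ∈ ⋀[ℝ]^p M := by
  suffices h : ∀ n, ∀ x ∈ ⋀[ℝ]^n M, ∀ p, n = p + 1 → contr d x ∈ ⋀[ℝ]^p M from
    h _ x hx p rfl
  intro n x hx
  induction hx using Submodule.pow_induction_on_left' with
  | algebraMap r => intro p hp; omega
  | add x y i _ _ hx hy => intro p hp; rw [map_add]; exact add_mem (hx p hp) (hy p hp)
  | mem_mul m hm i x hx ih =>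
    intro p hp
    obtain ⟨a, rfl⟩ := hm
    obtain rfl : i = p := by simpa using hp
    rw [contr_ι_mul]
    refine sub_mem (Submodule.smul_mem _ _ hx) ?_
    cases i with
    | zero => rw [contr_eq_zero d hx, mul_zero]; exact zero_mem _
    | succ i => exact ι_mul_mem a (ih i rfl)

/-- Contraction is a graded derivation of the exterior algebra. -/
theorem contr_mul (d : Dual ℝ M) {p : ℕ} {x : ExteriorAlgebra ℝ M} (hx : x ∈ ⋀[ℝ]^p M)
    (y : ExteriorAlgebra ℝ M) :
    contr d (x * y) = contr d x * y + (-1 : ℝ) ^ p • (x * contr d y) := by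
  induction hx using Submodule.pow_induction_on_left' with
  | algebraMap r => simp [contr_algebraMap, ← Algebra.smul_def]
  | add x x' i _ _ hx hx' =>
    rw [add_mul, map_add, hx, hx', map_add, add_mul, add_mul, smul_add]; abel
  | mem_mul m hm i x hx ih =>
    obtain ⟨a, rfl⟩ := hm
    rw [mul_assoc, contr_ι_mul, ih, contr_ι_mul, sub_mul, mul_add, mul_smul_comm, smul_mul_assoc,
      mul_assoc, mul_assoc, Nat.succ_eq_add_one, pow_succ, mul_neg_one, neg_smul]
    abel

/-- The pullback is compatible with contractions. -/
theorem contr_map (f : M →ₗ[ℝ] N) (d : Dual ℝ N) (x : ExteriorAlgebra ℝ M) :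
    contr d (ExteriorAlgebra.map f x) = ExteriorAlgebra.map f (contr (d ∘ₗ f) x) := by
  induction x using CliffordAlgebra.left_induction with
  | algebraMap r => rw [AlgHom.commutes, contr_algebraMap, contr_algebraMap, map_zero]
  | add x y hx hy => simp only [map_add, hx, hy]
  | ι_mul x a ih =>
    rw [map_mul, contr_ι_mul, ExteriorAlgebra.map_apply_ι, contr_ι_mul, ih, map_sub, map_smul,
      map_mul, ExteriorAlgebra.map_apply_ι, LinearMap.comp_apply]

/-- Contraction of a decomposable form: the `i`-th factor is paired with `d` and removed, with
sign `(-1)^i`. -/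
theorem contr_ιMulti (d : Dual ℝ M) (n : ℕ) (v : Fin (n + 1) → M) :
    contr d (ExteriorAlgebra.ιMulti ℝ (n + 1) v) =
      ∑ i : Fin (n + 1), ((-1 : ℝ) ^ (i : ℕ) * d (v i)) •
        ExteriorAlgebra.ιMulti ℝ n (fun j => v (i.succAbove j)) := by
  induction n with
  | zero =>
    rw [ExteriorAlgebra.ιMulti_succ_apply, contr_ι_mul]
    simp [contr_one]
  | succ n ih =>
    rw [ExteriorAlgebra.ιMulti_succ_apply, contr_ι_mul, ih, Finset.mul_sum,
      sub_eq_add_neg, ← Finset.sum_neg_distrib, Fin.sum_univ_succ (n := n + 1)]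
    congr 1
    · simp [Matrix.vecTail, Function.comp_def]
    · refine Finset.sum_congr rfl fun i _ => ?_
      rw [ExteriorAlgebra.ιMulti_succ_apply, mul_smul_comm, ← neg_smul]
      simp [Matrix.vecTail, Function.comp_def, pow_succ]

/-- Euler's identity: `∑ᵢ bᵢ ∧ i_{bⁱ} x = p • x` for a form `x` of degree `p`. -/
theorem euler {I : Type*} [Fintype I] (b : Basis I ℝ M) {p : ℕ} {x : ExteriorAlgebra ℝ M}
    (hx : x ∈ ⋀[ℝ]^p M) :
    ∑ i, ExteriorAlgebra.ι ℝ (b i) * contr (b.coord i) x = (p : ℝ) • x := by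
  induction hx using Submodule.pow_induction_on_left' with
  | algebraMap r => simp [contr_algebraMap]
  | add x y i _ _ hx hy => simp only [map_add, mul_add, Finset.sum_add_distrib, hx, hy, smul_add]
  | mem_mul m hm i x hx ih =>
    obtain ⟨a, rfl⟩ := hm
    have h1 : ∀ j, ExteriorAlgebra.ι ℝ (b j) * contr (b.coord j) (ExteriorAlgebra.ι ℝ a * x) =
        ExteriorAlgebra.ι ℝ (b.repr a j • b j) * x +
          ExteriorAlgebra.ι ℝ a * (ExteriorAlgebra.ι ℝ (b j) * contr (b.coord j) x) := by
      intro j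
      have h := ExteriorAlgebra.ι_add_mul_swap (R := ℝ) a (b j)
      rw [contr_ι_mul, mul_sub, ← mul_assoc, ← mul_assoc, eq_neg_of_add_eq_zero_left h]
      simp [sub_eq_add_neg]
    simp only [h1]
    rw [Finset.sum_add_distrib, ← Finset.sum_mul, ← map_sum, b.sum_repr, ← Finset.mul_sum, ih]
    rw [mul_smul_comm, Nat.succ_eq_add_one]
    push_cast
    rw [add_smul, one_smul, add_comm]

/-- A form of positive degree all of whose contractions vanish is zero, by Euler's identity. -/
theorem eq_zero_of_contr_eq_zero [FiniteDimensional ℝ M] {p : ℕ} {x : ExteriorAlgebra ℝ M}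
    (hx : x ∈ ⋀[ℝ]^(p + 1) M) (h : ∀ d : Dual ℝ M, contr d x = 0) : x = 0 := by
  have := euler (finBasis ℝ M) hx
  simp only [h, mul_zero, Finset.sum_const_zero] at this
  exact (smul_eq_zero.mp this.symm).resolve_left (by positivity)

/-- There are no nonzero forms above the top degree. -/
theorem exteriorPower_eq_zero [FiniteDimensional ℝ M] {p : ℕ} (hp : finrank ℝ M < p)
    {x : ExteriorAlgebra ℝ M} (hx : x ∈ ⋀[ℝ]^p M) : x = 0 := by
  rw [← ExteriorAlgebra.ιMulti_span_fixedDegree] at hx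
  refine (Submodule.mem_bot ℝ).mp (Submodule.span_le.mpr ?_ hx)
  rintro _ ⟨v, rfl⟩
  refine (ExteriorAlgebra.ιMulti ℝ p).map_linearDependent v fun hv => ?_
  have := hv.fintype_card_le_finrank
  rw [Fintype.card_fin] at this
  omega

/-- A form below the top degree is determined by its products with all vectors: contracting
`bᵢ ∧ x` with `bⁱ` and summing gives `(dim M - p) • x` by Euler's identity. -/
theorem eq_zero_of_ι_mul_eq_zero [FiniteDimensional ℝ M] {p : ℕ} (hp : p < finrank ℝ M)
    {x : ExteriorAlgebra ℝ M} (hx : x ∈ ⋀[ℝ]^p M)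
    (h : ∀ a : M, ExteriorAlgebra.ι ℝ a * x = 0) : x = 0 := by
  have h1 := euler (finBasis ℝ M) hx
  have h2 : ∀ i, ExteriorAlgebra.ι ℝ (finBasis ℝ M i) * contr ((finBasis ℝ M).coord i) x = x := by
    intro i
    have := contr_ι_mul ((finBasis ℝ M).coord i) (finBasis ℝ M i) x
    rw [h, map_zero] at this
    simpa using (sub_eq_zero.mp this.symm).symm
  simp only [h2, Finset.sum_const, Finset.card_univ, Fintype.card_fin] at h1
  rw [← Nat.cast_smul_eq_nsmul ℝ, ← sub_eq_zero, ← sub_smul] at h1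
  refine (smul_eq_zero.mp h1).resolve_left ?_
  have : (p : ℝ) < finrank ℝ M := by exact_mod_cast hp
  linarith

/-- Nondegeneracy of the wedge pairing between complementary degrees `k` and `p`, by induction on
`k`: if every `(k+1)`-form annihilates `x`, then every `k`-form annihilates each `a ∧ x`. -/
theorem eq_zero_of_wedge_eq_zero [FiniteDimensional ℝ M] (k : ℕ) :
    ∀ {p : ℕ}, k + p = finrank ℝ M → ∀ {x : ExteriorAlgebra ℝ M}, x ∈ ⋀[ℝ]^p M →
      (∀ β ∈ ⋀[ℝ]^k M, β * x = 0) → x = 0 := by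
  induction k with
  | zero =>
    intro p _ x _ h
    simpa using h 1 (by rw [ExteriorAlgebra.exteriorPower, pow_zero]; exact one_mem_one)
  | succ k ih =>
    intro p hp x hx h
    refine eq_zero_of_ι_mul_eq_zero (by omega) hx fun a => ?_
    refine ih (by omega) (ι_mul_mem a hx) fun β hβ => ?_
    rw [← mul_assoc]
    exact h _ (mul_ι_mem a hβ)

/-- Two-forms are central in the exterior algebra. -/
theorem two_form_commute {x : ExteriorAlgebra ℝ M} (hx : x ∈ ⋀[ℝ]^2 M)
    (y : ExteriorAlgebra ℝ M) : Commute x y := by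
  have h : ∀ a : M, Commute x (ExteriorAlgebra.ι ℝ a) := by
    intro a
    have hswap : ∀ c : M, ExteriorAlgebra.ι ℝ c * ExteriorAlgebra.ι ℝ a =
        -(ExteriorAlgebra.ι ℝ a * ExteriorAlgebra.ι ℝ c) := fun c =>
      eq_neg_of_add_eq_zero_left (ExteriorAlgebra.ι_add_mul_swap c a)
    rw [← ExteriorAlgebra.ιMulti_span_fixedDegree] at hx
    induction hx using Submodule.span_induction with
    | mem x h =>
      obtain ⟨v, rfl⟩ := h
      rw [ExteriorAlgebra.ιMulti_succ_apply, ExteriorAlgebra.ιMulti_succ_apply,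
        ExteriorAlgebra.ιMulti_zero_apply, mul_one, commute_iff_eq, mul_assoc, hswap, mul_neg,
        ← mul_assoc, hswap, neg_mul, neg_neg, mul_assoc]
    | zero => exact Commute.zero_left _
    | add x y _ _ hx hy => exact hx.add_left hy
    | smul r x _ hx => exact hx.smul_left r
  induction y using ExteriorAlgebra.induction with
  | algebraMap r => exact Algebra.commute_algebraMap_right r x
  | ι a => exact h a
  | mul a b ha hb => exact ha.mul_right hb
  | add a b ha hb => exact ha.add_right hb

end Contraction

/-! ### The star operator of a symplectic vector space -/

namespace SymplecticStarData

variable {m : ℕ} {V : Type} [AddCommGroup V] [Module ℝ V] (D : SymplecticStarData m V)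

include D in
theorem finrank_dual : finrank ℝ (Dual ℝ V) = 2 * m := by
  have := D.finite
  rw [Subspace.dual_finrank_eq, D.dim]

/-- Every covector is of the form `i(u)η`, since `η` is nondegenerate. -/
theorem form_surjective (a : Dual ℝ V) : ∃ u, D.form u = a := by
  have := D.finite
  have hinj : Function.Injective D.form :=
    (injective_iff_map_eq_zero D.form).mpr D.nondeg
  exact (LinearMap.injective_iff_surjective_of_finrank_eq_finrank
    (Subspace.dual_finrank_eq (K := ℝ) (V := V)).symm).mp hinj a

/-- Since `η` is nondegenerate, `k`-forms are spanned by the products of `i(u₁)η, …, i(u_k)η`. -/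
theorem span_induction {k : ℕ} {C : ExteriorAlgebra ℝ (Dual ℝ V) → Prop}
    (mem : ∀ u : Fin k → V, C (ExteriorAlgebra.ιMulti ℝ k (fun i => (D.form (u i) : Dual ℝ V))))
    (zero : C 0) (add : ∀ x y, C x → C y → C (x + y)) (smul : ∀ (r : ℝ) x, C x → C (r • x))
    {x : ExteriorAlgebra ℝ (Dual ℝ V)} (hx : x ∈ ⋀[ℝ]^k (Dual ℝ V)) : C x := by
  rw [← ExteriorAlgebra.ιMulti_span_fixedDegree] at hx
  induction hx using Submodule.span_induction with
  | mem x h =>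
    obtain ⟨v, rfl⟩ := h
    choose u hu using fun i => D.form_surjective (v i)
    rw [← funext hu]
    exact mem u
  | zero => exact zero
  | add x y _ _ hx hy => exact add x y hx hy
  | smul r x _ hx => exact smul r x hx

/-- Laplace expansion along the first column: `Λ^{k+1}(Π)(β, i(u)η ∧ α) = -Λ^k(Π)(i_u β, α)`. -/
theorem P_succ {k : ℕ} (u : V) {β α : ExteriorAlgebra ℝ (Dual ℝ V)}
    (hβ : β ∈ ⋀[ℝ]^(k + 1) (Dual ℝ V)) (hα : α ∈ ⋀[ℝ]^k (Dual ℝ V)) :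
    D.P (k + 1) β (ExteriorAlgebra.ι ℝ (D.form u) * α) =
      -D.P k (contr (Dual.eval ℝ V u) β) α := by
  refine D.span_induction (C := fun β => D.P (k + 1) β (ExteriorAlgebra.ι ℝ (D.form u) * α) =
      -D.P k (contr (Dual.eval ℝ V u) β) α) (fun s => ?_) (by simp)
    (fun x y hx hy => by simp only [map_add, LinearMap.add_apply, hx, hy, neg_add])
    (fun r x hx => by simp only [map_smul, LinearMap.smul_apply, hx, smul_neg]) hβ
  refine D.span_induction (C := fun α => D.P (k + 1) _ (ExteriorAlgebra.ι ℝ (D.form u) * α) =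
      -D.P k (contr (Dual.eval ℝ V u) _) α) (fun w => ?_) (by simp)
    (fun x y hx hy => by simp only [mul_add, map_add, hx, hy, neg_add])
    (fun r x hx => by simp only [mul_smul_comm, map_smul, hx, smul_neg]) hα
  have h : ExteriorAlgebra.ι ℝ (D.form u) *
      ExteriorAlgebra.ιMulti ℝ k (fun i => (D.form (w i) : Dual ℝ V)) =
      ExteriorAlgebra.ιMulti ℝ (k + 1)
        (fun i => (D.form ((Fin.cons u w : Fin (k + 1) → V) i) : Dual ℝ V)) := by
    rw [ExteriorAlgebra.ιMulti_succ_apply]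
    rfl
  rw [h, D.P_det, contr_ιMulti, Matrix.det_succ_column_zero, map_sum, LinearMap.sum_apply,
    ← Finset.sum_neg_distrib]
  refine Finset.sum_congr rfl fun i _ => ?_
  rw [map_smul, LinearMap.smul_apply, D.P_det k (fun j => s (i.succAbove j)) w]
  simp only [Matrix.of_apply, Fin.cons_zero, Dual.eval_apply, smul_eq_mul, mul_neg, neg_mul]
  rfl

theorem P_zero_one : D.P 0 1 1 = 1 := by
  simpa using D.P_det 0 Fin.elim0 Fin.elim0

/-- The volume form `η^m / m!`. -/
noncomputable def vol : ExteriorAlgebra ℝ (Dual ℝ V) := ((m.factorial : ℝ)⁻¹) • D.eta ^ m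

theorem vol_mem : D.vol ∈ ⋀[ℝ]^(2 * m) (Dual ℝ V) :=
  Submodule.smul_mem _ _ (pow_mem_exteriorPower D.eta_mem m)

/-- `*1 = η^m / m!`. -/
theorem S_one : D.S 1 = D.vol := by
  have h1 : (1 : ExteriorAlgebra ℝ (Dual ℝ V)) ∈ ⋀[ℝ]^0 (Dual ℝ V) := by
    rw [ExteriorAlgebra.exteriorPower, pow_zero]; exact one_mem_one
  have := D.S_def 0 ⟨1, h1⟩ ⟨1, h1⟩
  simpa [P_zero_one, vol] using this

/-- The star operator exchanges exterior multiplication and contraction: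
`*(i(u)η ∧ α) = (-1)^{k+1} i_u(*α)` for a `k`-form `α`. Both sides have the same product with
every `(k+1)`-form `β`, because `i_u` is a derivation and kills `β ∧ *α`, whose degree is
`2m + 1`. -/
theorem S_succ {k : ℕ} (u : V) {α : ExteriorAlgebra ℝ (Dual ℝ V)}
    (hα : α ∈ ⋀[ℝ]^k (Dual ℝ V)) :
    D.S (ExteriorAlgebra.ι ℝ (D.form u) * α) =
      (-1 : ℝ) ^ (k + 1) • contr (Dual.eval ℝ V u) (D.S α) := by
  have := D.finite
  have hdim := D.finrank_dual
  have hSα := D.S_grade k ⟨α, hα⟩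
  have hmem := ι_mul_mem (M := Dual ℝ V) (D.form u) hα
  by_cases hk : k + 1 ≤ 2 * m
  · have hS := D.S_grade (k + 1) ⟨_, hmem⟩
    rw [show 2 * m - k = 2 * m - (k + 1) + 1 by omega] at hSα
    have hc := contr_mem (Dual.eval ℝ V u) hSα
    rw [← sub_eq_zero]
    refine eq_zero_of_wedge_eq_zero (k + 1) (p := 2 * m - (k + 1)) (by omega)
      (sub_mem hS (Submodule.smul_mem _ _ hc)) fun β hβ => ?_
    have h1 := D.S_def (k + 1) ⟨_, hmem⟩ ⟨β, hβ⟩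
    have h2 := D.S_def k ⟨α, hα⟩ ⟨_, contr_mem (Dual.eval ℝ V u) hβ⟩
    have h3 : β * D.S α = 0 :=
      exteriorPower_eq_zero (by omega) (mul_mem_exteriorPower hβ hSα)
    have h4 := contr_mul (Dual.eval ℝ V u) hβ (D.S α)
    simp only at h1 h2
    rw [h3, map_zero, h2] at h4
    rw [mul_sub, h1, D.P_succ u hβ hα, mul_smul_comm, eq_neg_of_add_eq_zero_right h4.symm,
      neg_smul, sub_neg_eq_add, neg_add_cancel]
  · -- `i(u)η ∧ α` lies above the top degree, and `*α` is a scalar or zero.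
    rw [exteriorPower_eq_zero (by omega) hmem, map_zero]
    rw [show 2 * m - k = 0 by omega] at hSα
    rw [contr_eq_zero _ hSα, smul_zero]

/-- The two-form `η` in the exterior algebra represents the bilinear form: `i_v i_u η = η(u, v)`. -/
theorem contr_contr_eta (u v : V) :
    contr (Dual.eval ℝ V v) (contr (Dual.eval ℝ V u) D.eta) =
      algebraMap ℝ _ (D.form u v) := by
  have h : ∀ x ∈ ⋀[ℝ]^2 (Dual ℝ V),
      contr (Dual.eval ℝ V v) (contr (Dual.eval ℝ V u) x) = algebraMap ℝ _
        (D.P 2 x (ExteriorAlgebra.ιMulti ℝ 2 ![(D.form u : Dual ℝ V), (D.form v : Dual ℝ V)])) := by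
    intro x hx
    refine D.span_induction (C := fun x => contr (Dual.eval ℝ V v) (contr (Dual.eval ℝ V u) x) =
      algebraMap ℝ _ (D.P 2 x
        (ExteriorAlgebra.ιMulti ℝ 2 ![(D.form u : Dual ℝ V), (D.form v : Dual ℝ V)])))
      (fun s => ?_) (by simp)
      (fun x y hx hy => by simp only [map_add, LinearMap.add_apply, hx, hy])
      (fun r x hx => by simp only [map_smul, LinearMap.smul_apply, hx, smul_eq_mul,
        Algebra.algebraMap_eq_smul_one, mul_smul]) hx
    have hv : (![(D.form u : Dual ℝ V), (D.form v : Dual ℝ V)] : Fin 2 → Dual ℝ V) =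
        fun i => D.form ((![u, v] : Fin 2 → V) i) := by
      funext i; fin_cases i <;> rfl
    rw [hv, D.P_det, Matrix.det_fin_two]
    simp [ExteriorAlgebra.ιMulti_succ_apply, contr_ι_mul, contr_ι,
      Algebra.algebraMap_eq_smul_one, sub_smul, mul_smul, Matrix.vecTail]
    exact smul_comm _ _ _
  rw [h _ D.eta_mem, D.eta_dual]

end SymplecticStarData

/-! ### Products of symplectic vector spaces -/

section Product

open SymplecticStarData

variable {m₁ m₂ : ℕ} {V₁ V₂ : Type}
  [AddCommGroup V₁] [Module ℝ V₁] [AddCommGroup V₂] [Module ℝ V₂]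
  (D₁ : SymplecticStarData m₁ V₁) (D₂ : SymplecticStarData m₂ V₂)
  (D₁₂ : SymplecticStarData (m₁ + m₂) (V₁ × V₂))
  (hform : ∀ x y : V₁ × V₂, D₁₂.form x y = D₁.form x.1 y.1 + D₂.form x.2 y.2)

/-- The pullback `p₁*` of forms along the first projection. -/
noncomputable def pull₁ (V₁ V₂ : Type)
    [AddCommGroup V₁] [Module ℝ V₁] [AddCommGroup V₂] [Module ℝ V₂] :
    ExteriorAlgebra ℝ (Dual ℝ V₁) →ₐ[ℝ] ExteriorAlgebra ℝ (Dual ℝ (V₁ × V₂)) :=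
  ExteriorAlgebra.map ((LinearMap.fst ℝ V₁ V₂).dualMap)

/-- The pullback `p₂*` of forms along the second projection. -/
noncomputable def pull₂ (V₁ V₂ : Type)
    [AddCommGroup V₁] [Module ℝ V₁] [AddCommGroup V₂] [Module ℝ V₂] :
    ExteriorAlgebra ℝ (Dual ℝ V₂) →ₐ[ℝ] ExteriorAlgebra ℝ (Dual ℝ (V₁ × V₂)) :=
  ExteriorAlgebra.map ((LinearMap.snd ℝ V₁ V₂).dualMap)

theorem contr_pull₁ (u : V₁ × V₂) (x : ExteriorAlgebra ℝ (Dual ℝ V₁)) :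
    contr (Dual.eval ℝ (V₁ × V₂) u) (pull₁ V₁ V₂ x) =
      pull₁ V₁ V₂ (contr (Dual.eval ℝ V₁ u.1) x) :=
  contr_map _ _ x

theorem contr_pull₂ (u : V₁ × V₂) (x : ExteriorAlgebra ℝ (Dual ℝ V₂)) :
    contr (Dual.eval ℝ (V₁ × V₂) u) (pull₂ V₁ V₂ x) =
      pull₂ V₁ V₂ (contr (Dual.eval ℝ V₂ u.2) x) :=
  contr_map _ _ x

theorem contr_zero_left {M : Type*} [AddCommGroup M] [Module ℝ M] (x : ExteriorAlgebra ℝ M) :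
    contr (0 : Dual ℝ M) x = 0 := by
  rw [contr, map_zero, LinearMap.zero_apply]

include hform in
/-- `η = p₁*η₁ + p₂*η₂` in the exterior algebra: both sides have the same double contractions,
and a two-form is determined by these. -/
theorem eta_prod : D₁₂.eta = pull₁ V₁ V₂ D₁.eta + pull₂ V₁ V₂ D₂.eta := by
  have := D₁₂.finite
  have hmem : D₁₂.eta - (pull₁ V₁ V₂ D₁.eta + pull₂ V₁ V₂ D₂.eta) ∈
      ⋀[ℝ]^(1 + 1) (Dual ℝ (V₁ × V₂)) :=
    sub_mem D₁₂.eta_mem (add_mem (map_mem_exteriorPower _ D₁.eta_mem)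
      (map_mem_exteriorPower _ D₂.eta_mem))
  have heval : ∀ d : Dual ℝ (Dual ℝ (V₁ × V₂)), ∃ u, Dual.eval ℝ (V₁ × V₂) u = d :=
    (Module.evalEquiv ℝ (V₁ × V₂)).surjective
  rw [← sub_eq_zero]
  refine eq_zero_of_contr_eq_zero hmem fun d => ?_
  refine eq_zero_of_contr_eq_zero (p := 0) (contr_mem d hmem) fun e => ?_
  obtain ⟨u, rfl⟩ := heval d
  obtain ⟨v, rfl⟩ := heval e
  simp only [map_sub, map_add, contr_pull₁, contr_pull₂, contr_contr_eta, AlgHom.commutes, hform]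
  rw [sub_self]

include hform in
/-- The volume form of the product is `vol₁ ⊠ vol₂`. -/
theorem vol_prod : D₁₂.vol = pull₁ V₁ V₂ D₁.vol * pull₂ V₁ V₂ D₂.vol := by
  have := D₁.finite
  have := D₂.finite
  have hd₁ := D₁.finrank_dual
  have hd₂ := D₂.finrank_dual
  have h₁ : ∀ i, m₁ < i → D₁.eta ^ i = 0 := fun i hi =>
    exteriorPower_eq_zero (by omega) (pow_mem_exteriorPower D₁.eta_mem i)
  have h₂ : ∀ i, m₂ < i → D₂.eta ^ i = 0 := fun i hi =>
    exteriorPower_eq_zero (by omega) (pow_mem_exteriorPower D₂.eta_mem i)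
  have hcomm : Commute (pull₁ V₁ V₂ D₁.eta) (pull₂ V₁ V₂ D₂.eta) :=
    two_form_commute (map_mem_exteriorPower _ D₁.eta_mem) _
  -- Only the bidegree `(2m₁, 2m₂)` term of the binomial expansion survives.
  have hpow : D₁₂.eta ^ (m₁ + m₂) = ((m₁ + m₂).choose m₁ : ℝ) •
      (pull₁ V₁ V₂ D₁.eta ^ m₁ * pull₂ V₁ V₂ D₂.eta ^ m₂) := by
    rw [eta_prod D₁ D₂ D₁₂ hform, hcomm.add_pow, Finset.sum_eq_single m₁]
    · rw [Nat.add_sub_cancel_left, Nat.cast_smul_eq_nsmul, nsmul_eq_mul, Nat.cast_comm]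
    · intro i hi hne
      rcases lt_or_gt_of_ne hne with h | h
      · rw [← map_pow (pull₂ V₁ V₂), h₂ _ (by omega), map_zero, mul_zero, zero_mul]
      · rw [← map_pow, h₁ _ h, map_zero, zero_mul, zero_mul]
    · intro h
      exact absurd (Finset.mem_range.mpr (by omega)) h
  rw [vol, vol, vol, hpow, map_smul, map_smul, map_pow, map_pow, smul_mul_smul_comm, smul_smul]
  congr 1
  rw [Nat.cast_add_choose]
  have := Nat.factorial_ne_zero (m₁ + m₂)
  field_simp

include hform in
/-- `i(u, 0)η = p₁*(i(u)η₁)`. -/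
theorem ι_form_inl (u : V₁) : ExteriorAlgebra.ι ℝ (D₁₂.form (u, 0)) =
    pull₁ V₁ V₂ (ExteriorAlgebra.ι ℝ (D₁.form u)) := by
  rw [pull₁, ExteriorAlgebra.map_apply_ι]
  congr 1
  ext x <;> simp [hform]

include hform in
/-- `i(0, u)η = p₂*(i(u)η₂)`. -/
theorem ι_form_inr (u : V₂) : ExteriorAlgebra.ι ℝ (D₁₂.form (0, u)) =
    pull₂ V₁ V₂ (ExteriorAlgebra.ι ℝ (D₂.form u)) := by
  rw [pull₂, ExteriorAlgebra.map_apply_ι]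
  congr 1
  ext x <;> simp [hform]

include hform in
/-- The case `α₁ = 1`, by induction on the degree of `α₂`. No sign appears because `p₁*vol₁` has
even degree and is killed by contraction with `(0, u)`. -/
theorem S_pull₂ {k : ℕ} {α : ExteriorAlgebra ℝ (Dual ℝ V₂)} (hα : α ∈ ⋀[ℝ]^k (Dual ℝ V₂)) :
    D₁₂.S (pull₂ V₁ V₂ α) = pull₁ V₁ V₂ D₁.vol * pull₂ V₁ V₂ (D₂.S α) := by
  induction hα using Submodule.pow_induction_on_left' with
  | algebraMap r =>
    simp only [Algebra.algebraMap_eq_smul_one, map_smul, map_one, S_one,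
      vol_prod D₁ D₂ D₁₂ hform, mul_smul_comm]
  | add x y i _ _ hx hy => simp only [map_add, mul_add, hx, hy]
  | mem_mul a ha i x hx ih =>
    obtain ⟨a, rfl⟩ := ha
    obtain ⟨u, rfl⟩ := D₂.form_surjective a
    have hx' : pull₂ V₁ V₂ x ∈ ⋀[ℝ]^i (Dual ℝ (V₁ × V₂)) := map_mem_exteriorPower _ hx
    have hvol : pull₁ V₁ V₂ D₁.vol ∈ ⋀[ℝ]^(2 * m₁) (Dual ℝ (V₁ × V₂)) :=
      map_mem_exteriorPower _ D₁.vol_mem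
    rw [map_mul, ← ι_form_inr D₁ D₂ D₁₂ hform, D₁₂.S_succ _ hx', ih,
      D₂.S_succ u hx, contr_mul _ hvol, contr_pull₁, contr_pull₂,
      map_zero, contr_zero_left, map_zero, zero_mul, zero_add, (even_two_mul m₁).neg_one_pow,
      one_smul, map_smul, mul_smul_comm]

include hform in
/-- The product formula, by induction on the degree of `α₁`. A new factor `p₁*(i(u)η₁)` becomes,
under `*`, the contraction `i_{(u, 0)}` with sign `(-1)^{k₁+k₂+1}`, and under `*₁` the contraction
`i_u` with sign `(-1)^{k₁+1}`; the ratio `(-1)^{k₂}` is the increment of `(-1)^{k₁k₂}`. -/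
theorem S_box {k₁ k₂ : ℕ} {α₁ : ExteriorAlgebra ℝ (Dual ℝ V₁)} {α₂ : ExteriorAlgebra ℝ (Dual ℝ V₂)}
    (hα₁ : α₁ ∈ ⋀[ℝ]^k₁ (Dual ℝ V₁)) (hα₂ : α₂ ∈ ⋀[ℝ]^k₂ (Dual ℝ V₂)) :
    D₁₂.S (pull₁ V₁ V₂ α₁ * pull₂ V₁ V₂ α₂) =
      (-1 : ℝ) ^ (k₁ * k₂) • (pull₁ V₁ V₂ (D₁.S α₁) * pull₂ V₁ V₂ (D₂.S α₂)) := by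
  induction hα₁ using Submodule.pow_induction_on_left' with
  | algebraMap r =>
    simp only [Algebra.algebraMap_eq_smul_one, map_smul, map_one, S_one, smul_mul_assoc, one_mul,
      S_pull₂ D₁ D₂ D₁₂ hform hα₂, zero_mul, pow_zero, one_smul]
  | add x y i _ _ hx hy => simp only [map_add, add_mul, hx, hy, smul_add]
  | mem_mul a ha i x hx ih =>
    obtain ⟨a, rfl⟩ := ha
    obtain ⟨u, rfl⟩ := D₁.form_surjective a
    have hx₂ : pull₁ V₁ V₂ x * pull₂ V₁ V₂ α₂ ∈ ⋀[ℝ]^(i + k₂) (Dual ℝ (V₁ × V₂)) :=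
      mul_mem_exteriorPower (map_mem_exteriorPower _ hx) (map_mem_exteriorPower _ hα₂)
    have hS₁ : pull₁ V₁ V₂ (D₁.S x) ∈ ⋀[ℝ]^(2 * m₁ - i) (Dual ℝ (V₁ × V₂)) :=
      map_mem_exteriorPower _ (D₁.S_grade i ⟨x, hx⟩)
    rw [map_mul (pull₁ V₁ V₂), mul_assoc, ← ι_form_inl D₁ D₂ D₁₂ hform, D₁₂.S_succ _ hx₂, ih, map_smul,
      contr_mul _ hS₁, contr_pull₁, contr_pull₂, map_zero, contr_zero_left, map_zero, mul_zero,
      smul_zero, add_zero, D₁.S_succ u hx, map_smul, smul_mul_assoc, smul_smul, smul_smul]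
    congr 1
    -- Both signs are `(-1)^(i + 1 + k₂ + i * k₂)`.
    rw [Nat.succ_eq_add_one, ← pow_add, ← pow_add]
    congr 1
    ring

end Product

/-- Let `(V₁, η₁)` and `(V₂, η₂)` be symplectic vector spaces (of dimensions
`2m₁`, `2m₂`) with symplectic star operators `*₁`, `*₂`, and equip `V₁ × V₂` with the
symplectic form `p₁*η₁ + p₂*η₂` (hypothesis `hform`), with star operator `*`.  Then for a
`k₁`-form `α₁` on `V₁` and a `k₂`-form `α₂` on `V₂`,
`*(α₁ ⊠ α₂) = (-1)^{k₁k₂} (*₁α₁) ⊠ (*₂α₂)`, where `α₁ ⊠ α₂ = (p₁*α₁) ∧ (p₂*α₂)` and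
`p_i* ` is the pullback `ExteriorAlgebra.map (pᵢ.dualMap)`. -/
theorem symplectic_star_product (m₁ m₂ : ℕ) (V₁ V₂ : Type)
    [AddCommGroup V₁] [Module ℝ V₁] [AddCommGroup V₂] [Module ℝ V₂]
    (D₁ : SymplecticStarData m₁ V₁) (D₂ : SymplecticStarData m₂ V₂)
    (D₁₂ : SymplecticStarData (m₁ + m₂) (V₁ × V₂))
    (hform : ∀ x y : V₁ × V₂, D₁₂.form x y = D₁.form x.1 y.1 + D₂.form x.2 y.2)
    (k₁ k₂ : ℕ) (α₁ : ⋀[ℝ]^k₁ (Module.Dual ℝ V₁)) (α₂ : ⋀[ℝ]^k₂ (Module.Dual ℝ V₂)) :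
    D₁₂.S
      ((ExteriorAlgebra.map ((LinearMap.fst ℝ V₁ V₂).dualMap)
          (α₁ : ExteriorAlgebra ℝ (Module.Dual ℝ V₁))) *
       (ExteriorAlgebra.map ((LinearMap.snd ℝ V₁ V₂).dualMap)
          (α₂ : ExteriorAlgebra ℝ (Module.Dual ℝ V₂))))
    = ((-1 : ℝ)) ^ (k₁ * k₂) •
      ((ExteriorAlgebra.map ((LinearMap.fst ℝ V₁ V₂).dualMap)
          (D₁.S (α₁ : ExteriorAlgebra ℝ (Module.Dual ℝ V₁)))) *
       (ExteriorAlgebra.map ((LinearMap.snd ℝ V₁ V₂).dualMap)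
          (D₂.S (α₂ : ExteriorAlgebra ℝ (Module.Dual ℝ V₂))))) := by
  exact S_box D₁ D₂ D₁₂ hform α₁.2 α₂.2
end

section
/- Let g be the 6-dimensional nilpotent Lie algebra with basis dual 1-forms α₁,…,α₆ satisfying dα₁ = dα₂ = dα₃ = 0, dα₄ = α₁∧α₂, dα₅ = α₁∧α₄, dα₆ = α₁∧α₅ + α₂∧α₃ + α₂∧α₄ in the Chevalley–Eilenberg complex (Λ*g*, d). Then H³(Λ*g*, d) is 6-dimensional, spanned by the classes of α₁₂₆, α₁₃₅, α₁₃₆+α₁₄₆, α₁₃₆+α₂₃₅, α₁₅₆−α₂₃₆−α₂₄₆, α₁₅₆+α₃₄₅−α₂₄₆, and H⁵(Λ*g*, d) is 3-dimensional, spanned by the classes of α₁₂₄₅₆, α₁₃₄₅₆, α₂₃₄₅₆. -/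
/-!
The proof is linear algebra in the monomial basis `e i₁ * ⋯ * e iₙ`, `i₁ < ⋯ < iₙ`, arranged so
that ranks never have to be computed.

Sorting the factors of a monomial (`e_swap`, `e_sq`) and applying the Leibniz rule evaluates `d`
on monomials; from this `d ∘ d = 0` (`sq_zero`) and `d` raises degree by one (`map_le`). Hence
representatives and coboundaries lie in the cocycles. The rest is certified by the criterion
`cohomology_basis`, which asks for three things:

* the forms of the given degree are spanned by the representatives, the coboundaries and
  auxiliary vectors `w`;
* `d` is injective on the span of `w`, because functionals `ψ` are dual to the vectors `d (w j)`.
  So a cocycle has no `w`-component, and cocycles are representatives plus coboundaries;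
* functionals `φ` vanish on coboundaries and are dual to the representatives, which gives both
  the independence of the representatives and their independence modulo coboundaries.

In degree 3 there are seven vectors `w` (`20 - 6 - 7`, where 6 is the number of classes and 7 the
rank of `d` on 2-forms); in degree 5 there are none, as every 5-form is closed. All functionals
are combinations of monomial coefficients, realised as iterated contractions (`coord`).
-/

set_option synthInstance.maxHeartbeats 1000000
set_option maxHeartbeats 1000000

open Module

set_option linter.unusedSimpArgs false

namespace NilpotentCE

/-- The exterior algebra of `g* = ℝ⁶`, carrying the Chevalley–Eilenberg complex. -/
abbrev Forms := ExteriorAlgebra ℝ (Fin 6 → ℝ)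

/-- The basis 1-forms, numbered from `0`: `e i` is the form `α_{i+1}`. -/
noncomputable def e (i : Fin 6) : Forms := ExteriorAlgebra.ι ℝ (Pi.single i (1 : ℝ))

/-- `d` is the Chevalley–Eilenberg differential of `(0,0,0,12,14,15+23+24)`. It suffices to ask
for the Leibniz rule when the left factor is a 1-form, since these generate the algebra. -/
structure IsDifferential (d : Module.End ℝ Forms) : Prop where
  one : d 1 = 0
  leibniz : ∀ (v : Fin 6 → ℝ) (x : Forms), d (ExteriorAlgebra.ι ℝ v * x)
    = d (ExteriorAlgebra.ι ℝ v) * x - ExteriorAlgebra.ι ℝ v * d x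
  e0 : d (e 0) = 0
  e1 : d (e 1) = 0
  e2 : d (e 2) = 0
  e3 : d (e 3) = e 0 * e 1
  e4 : d (e 4) = e 0 * e 3
  e5 : d (e 5) = e 0 * e 4 + e 1 * e 2 + e 1 * e 3

/-! ### Normal forms for products of the basis 1-forms -/

lemma e_sq (i : Fin 6) : e i * e i = 0 := ExteriorAlgebra.ι_sq_zero _

lemma e_sq_mul (i : Fin 6) (x : Forms) : e i * (e i * x) = 0 := by
  rw [← mul_assoc, e_sq, zero_mul]

/-- The condition `i < j` makes this a terminating rewrite rule that sorts the factors of a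
monomial; likewise for `e_swap_mul`. -/
lemma e_swap {i j : Fin 6} (_ : i < j) : e j * e i = -(e i * e j) :=
  eq_neg_of_add_eq_zero_left (ExteriorAlgebra.ι_add_mul_swap _ _)

lemma e_swap_mul {i j : Fin 6} (h : i < j) (x : Forms) :
    e j * (e i * x) = -(e i * (e j * x)) := by
  rw [← mul_assoc, e_swap h, neg_mul, mul_assoc]

lemma ι_eq_sum (v : Fin 6 → ℝ) : ExteriorAlgebra.ι ℝ v = ∑ i, v i • e i := by
  conv_lhs => rw [← Finset.univ_sum_single v]
  rw [map_sum]
  refine Finset.sum_congr rfl fun i _ => ?_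
  rw [e, ← map_smul, ← Pi.single_smul', smul_eq_mul, mul_one]

/-- The monomials with increasing indices span the forms of degree `n`. -/
lemma exteriorPower_le {n : ℕ} {X : Submodule ℝ Forms}
    (h : ∀ f : Fin n ↪o Fin 6, (List.ofFn fun i => e (f i)).prod ∈ X) :
    ⋀[ℝ]^n (Fin 6 → ℝ) ≤ X := by
  have hspan := exteriorPower.ιMulti_family_span_of_span (n := n) ℝ
    (Pi.basisFun ℝ (Fin 6)).span_eq
  have := congrArg (Submodule.map (⋀[ℝ]^n (Fin 6 → ℝ)).subtype) hspan
  rw [Submodule.map_span, Submodule.map_top, Submodule.range_subtype] at this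
  rw [← this, Submodule.span_le]
  rintro _ ⟨_, ⟨s, rfl⟩, rfl⟩
  have := h (Set.powersetCard.ofFinEmbEquiv.symm s)
  simpa [ExteriorAlgebra.ιMulti_family, ExteriorAlgebra.ιMulti_apply, e] using this

lemma exteriorPower_two_le {X : Submodule ℝ Forms}
    (h : ∀ a b : Fin 6, a < b → e a * e b ∈ X) : ⋀[ℝ]^2 (Fin 6 → ℝ) ≤ X :=
  exteriorPower_le fun f => by
    simpa [List.ofFn_succ] using h (f 0) (f 1) (f.strictMono (by decide))

lemma exteriorPower_three_le {X : Submodule ℝ Forms}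
    (h : ∀ a b : Fin 6, a < b → ∀ c, b < c → e a * (e b * e c) ∈ X) :
    ⋀[ℝ]^3 (Fin 6 → ℝ) ≤ X :=
  exteriorPower_le fun f => by
    simpa [List.ofFn_succ] using h (f 0) (f 1) (f.strictMono (by decide)) (f 2)
      (f.strictMono (by decide))

lemma exteriorPower_four_le {X : Submodule ℝ Forms}
    (h : ∀ a b : Fin 6, a < b → ∀ c, b < c → ∀ k, c < k → e a * (e b * (e c * e k)) ∈ X) :
    ⋀[ℝ]^4 (Fin 6 → ℝ) ≤ X :=
  exteriorPower_le fun f => by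
    simpa [List.ofFn_succ] using h (f 0) (f 1) (f.strictMono (by decide)) (f 2)
      (f.strictMono (by decide)) (f 3) (f.strictMono (by decide))

lemma exteriorPower_five_le {X : Submodule ℝ Forms}
    (h : ∀ a b : Fin 6, a < b → ∀ c, b < c → ∀ k, c < k → ∀ l, k < l →
      e a * (e b * (e c * (e k * e l))) ∈ X) :
    ⋀[ℝ]^5 (Fin 6 → ℝ) ≤ X :=
  exteriorPower_le fun f => by
    simpa [List.ofFn_succ] using h (f 0) (f 1) (f.strictMono (by decide)) (f 2)
      (f.strictMono (by decide)) (f 3) (f.strictMono (by decide)) (f 4) (f.strictMono (by decide))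

lemma e_mem (i : Fin 6) : e i ∈ LinearMap.range (ExteriorAlgebra.ι ℝ (M := Fin 6 → ℝ)) :=
  ⟨_, rfl⟩

lemma list_prod_mem (l : List (Fin 6)) :
    (l.map e).prod ∈ ⋀[ℝ]^l.length (Fin 6 → ℝ) := by
  induction l with
  | nil => simp [ExteriorAlgebra.exteriorPower]
  | cons i l ih =>
    rw [List.map_cons, List.prod_cons, List.length_cons, ExteriorAlgebra.exteriorPower, pow_succ']
    exact Submodule.mul_mem_mul (e_mem i) ih

/-! ### Coordinate functionals -/

/-- Contraction of forms with the `k`-th basis vector of `g`. -/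
noncomputable def contr (k : Fin 6) : Module.End ℝ Forms :=
  CliffordAlgebra.contractLeft (Q := (0 : QuadraticForm ℝ (Fin 6 → ℝ)))
    (LinearMap.proj (R := ℝ) (φ := fun _ : Fin 6 => ℝ) k)

lemma contr_e_mul (k i : Fin 6) (x : Forms) :
    contr k (e i * x) = (if i = k then x else 0) - e i * contr k x := by
  refine (CliffordAlgebra.contractLeft_ι_mul _ _ _).trans ?_
  congr 1
  by_cases h : i = k
  · subst h; simp
  · simp [h, Ne.symm h]

lemma contr_one (k : Fin 6) : contr k 1 = 0 :=
  CliffordAlgebra.contractLeft_one (Q := (0 : QuadraticForm ℝ (Fin 6 → ℝ))) _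

lemma contr_e (k i : Fin 6) : contr k (e i) = if i = k then 1 else 0 := by
  have := contr_e_mul k i 1
  rwa [mul_one, contr_one, mul_zero, sub_zero] at this

/-- The coefficient of the monomial `e k₁ * ⋯ * e kₙ`, for distinct `k₁, …, kₙ`: contract with
the basis vectors `k₁, …, kₙ` in turn and take the scalar part. -/
noncomputable def coord : List (Fin 6) → Module.Dual ℝ Forms
  | [] => (ExteriorAlgebra.algebraMapInv (R := ℝ) (M := Fin 6 → ℝ)).toLinearMap
  | k :: l => coord l ∘ₗ contr k

lemma coord_cons (k : Fin 6) (l : List (Fin 6)) (x : Forms) :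
    coord (k :: l) x = coord l (contr k x) := rfl

lemma coord_nil_one : coord [] 1 = 1 := map_one ExteriorAlgebra.algebraMapInv

lemma coord_nil_e (i : Fin 6) : coord [] (e i) = 0 := by
  simp [coord, ExteriorAlgebra.algebraMapInv, e]

lemma coord_nil_e_mul (i : Fin 6) (x : Forms) : coord [] (e i * x) = 0 := by
  have h : coord [] (e i * x) = coord [] (e i) * coord [] x :=
    map_mul ExteriorAlgebra.algebraMapInv _ _
  rw [h, coord_nil_e, zero_mul]

/-! ### The differential -/

namespace IsDifferential

variable {d : Module.End ℝ Forms} (hd : IsDifferential d)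
include hd

lemma mul (i : Fin 6) (x : Forms) : d (e i * x) = d (e i) * x - e i * d x := hd.leibniz _ x

lemma sq_zero (x : Forms) : d (d x) = 0 := by
  induction x using CliffordAlgebra.left_induction with
  | algebraMap r => rw [Algebra.algebraMap_eq_smul_one, map_smul, map_smul]; simp [hd.one]
  | add x y hx hy => rw [map_add, map_add, hx, hy, add_zero]
  | ι_mul x v hx =>
    have key : ∀ i, d (d (e i * x)) = 0 := by
      intro i
      fin_cases i <;>
      simp [hd.mul, hx, hd.e0, hd.e1, hd.e2, hd.e3, hd.e4, hd.e5, add_mul, mul_assoc, mul_sub,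
        e_sq_mul, e_swap_mul]
    change d (d (ExteriorAlgebra.ι ℝ v * x)) = 0
    rw [ι_eq_sum, Finset.sum_mul, map_sum, map_sum]
    exact Finset.sum_eq_zero fun i _ => by rw [smul_mul_assoc, map_smul, map_smul, key, smul_zero]

lemma d_e_mem (i : Fin 6) : d (e i) ∈ ⋀[ℝ]^2 (Fin 6 → ℝ) := by
  have h : ∀ i j, e i * e j ∈ ⋀[ℝ]^2 (Fin 6 → ℝ) := fun i j => by
    simpa using list_prod_mem [i, j]
  fin_cases i <;> simp [hd.e0, hd.e1, hd.e2, hd.e3, hd.e4, hd.e5, h, Submodule.add_mem]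

lemma map_le (n : ℕ) : Submodule.map d (⋀[ℝ]^n (Fin 6 → ℝ)) ≤ ⋀[ℝ]^(n + 1) (Fin 6 → ℝ) := by
  rw [Submodule.map_le_iff_le_comap]
  intro x hx
  refine Submodule.pow_induction_on_left' _
    (C := fun n x _ => d x ∈ ⋀[ℝ]^(n + 1) (Fin 6 → ℝ)) ?_ ?_ ?_ hx
  · intro r
    rw [Algebra.algebraMap_eq_smul_one, map_smul, hd.one, smul_zero]
    exact zero_mem _
  · intro x y i _ _ h1 h2
    rw [map_add]
    exact add_mem h1 h2
  · rintro _ ⟨v, rfl⟩ i x hx ih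
    rw [hd.leibniz]
    refine sub_mem ?_ ?_
    · have h : d (ExteriorAlgebra.ι ℝ v) ∈ ⋀[ℝ]^2 (Fin 6 → ℝ) := by
        rw [ι_eq_sum, map_sum]
        exact Submodule.sum_mem _ fun i _ => by
          rw [map_smul]
          exact Submodule.smul_mem _ _ (hd.d_e_mem i)
      have := Submodule.mul_mem_mul h hx
      rwa [ExteriorAlgebra.exteriorPower, ← pow_add, add_comm 2 i] at this
    · rw [ExteriorAlgebra.exteriorPower, pow_succ']
      exact Submodule.mul_mem_mul ⟨v, rfl⟩ ih

/-- A criterion for the classes of `r` to form a basis of the cohomology of `d` in degree `n + 1`.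
The vectors `w` span a complement of the cocycles, the functionals `ψ` witnessing that `d` is
injective on it. The functionals `φ` kill coboundaries, hence descend to cohomology classes,
where they are dual to `r`. -/
lemma cohomology_basis (n m k : ℕ) (r : Fin m → Forms) (w : Fin k → Forms)
    (φ : Fin m → Module.Dual ℝ Forms) (ψ : Fin k → Module.Dual ℝ Forms)
    (hr : ∀ i, d (r i) = 0) (hrn : ∀ i, r i ∈ ⋀[ℝ]^(n + 1) (Fin 6 → ℝ))
    (hspan : ⋀[ℝ]^(n + 1) (Fin 6 → ℝ) ≤ Submodule.span ℝ (Set.range r) ⊔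
      Submodule.map d (⋀[ℝ]^n (Fin 6 → ℝ)) ⊔ Submodule.span ℝ (Set.range w))
    (hφ : ∀ i j, φ i (r j) = if i = j then 1 else 0)
    (hφd : ⋀[ℝ]^n (Fin 6 → ℝ) ≤ ⨅ i, LinearMap.ker (φ i ∘ₗ d))
    (hψ : ∀ i j, ψ i (d (w j)) = if i = j then 1 else 0) :
    (LinearMap.ker d ⊓ ⋀[ℝ]^(n + 1) (Fin 6 → ℝ)
      = Submodule.span ℝ (Set.range r) ⊔ Submodule.map d (⋀[ℝ]^n (Fin 6 → ℝ))) ∧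
    (Submodule.span ℝ (Set.range r) ⊓ Submodule.map d (⋀[ℝ]^n (Fin 6 → ℝ)) = ⊥) ∧
    Module.finrank ℝ (Submodule.span ℝ (Set.range r)) = m := by
  have hle : Submodule.span ℝ (Set.range r) ⊔ Submodule.map d (⋀[ℝ]^n (Fin 6 → ℝ)) ≤
      LinearMap.ker d ⊓ ⋀[ℝ]^(n + 1) (Fin 6 → ℝ) := by
    refine sup_le ?_ (le_inf ?_ (hd.map_le n))
    · rw [Submodule.span_le]
      rintro _ ⟨i, rfl⟩
      exact ⟨hr i, hrn i⟩
    · rintro _ ⟨y, -, rfl⟩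
      exact hd.sq_zero y
  refine ⟨le_antisymm ?_ hle, ?_, ?_⟩
  · rintro x ⟨hx, hxn⟩
    obtain ⟨z, hz, y, hy, rfl⟩ := Submodule.mem_sup.mp (hspan hxn)
    obtain ⟨c, rfl⟩ := (Submodule.mem_span_range_iff_exists_fun ℝ).mp hy
    have hdy : d (∑ i, c i • w i) = 0 := by
      have h : d (z + ∑ i, c i • w i) = 0 := hx
      rwa [map_add, show d z = 0 from (hle hz).1, zero_add] at h
    have hc : ∀ i, c i = 0 := fun i => by
      simpa [map_sum, hψ] using congrArg (ψ i) hdy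
    simpa [hc] using hz
  · rw [eq_bot_iff]
    rintro x ⟨hx, y, hy, rfl⟩
    obtain ⟨c, hc⟩ := (Submodule.mem_span_range_iff_exists_fun ℝ).mp hx
    have hc0 : ∀ i, c i = 0 := fun i => by
      have h : φ i (d y) = 0 := (Submodule.mem_iInf _).mp (hφd hy) i
      rw [← hc] at h
      simpa [map_sum, hφ] using h
    rw [← hc]
    simp [hc0]
  · have hli : LinearIndependent ℝ r :=
      .of_pairwise_dual_eq_zero_one r φ (fun i j hij => by simp [hφ, hij]) (fun i => by simp [hφ])
    rw [finrank_span_eq_card hli, Fintype.card_fin]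

end IsDifferential

/-! ### Cohomology in degree 3 -/

namespace IsDifferential

/-- Representatives of a basis of the third cohomology. -/
noncomputable def r3 : Fin 6 → Forms :=
  ![e 0 * e 1 * e 5, e 0 * e 2 * e 4, e 0 * e 2 * e 5 + e 0 * e 3 * e 5,
    e 0 * e 2 * e 5 + e 1 * e 2 * e 4, e 0 * e 4 * e 5 - e 1 * e 2 * e 5 - e 1 * e 3 * e 5,
    e 0 * e 4 * e 5 + e 2 * e 3 * e 4 - e 1 * e 3 * e 5]

lemma range_r3 : Set.range r3 = {e 0 * e 1 * e 5, e 0 * e 2 * e 4,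
    e 0 * e 2 * e 5 + e 0 * e 3 * e 5,
      e 0 * e 2 * e 5 + e 1 * e 2 * e 4, e 0 * e 4 * e 5 - e 1 * e 2 * e 5 - e 1 * e 3 * e 5,
      e 0 * e 4 * e 5 + e 2 * e 3 * e 4 - e 1 * e 3 * e 5} := by
  simp only [r3, Matrix.range_cons, Matrix.range_empty, Set.union_empty, Set.singleton_union]

/-- A basis of a complement of the cocycles in degree 3. -/
noncomputable def w3 : Fin 7 → Forms :=
  ![e 1 * (e 2 * e 4), e 1 * (e 3 * e 5), e 1 * (e 4 * e 5), e 2 * (e 3 * e 4), e 2 * (e 3 * e 5),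
      e 2 * (e 4 * e 5), e 3 * (e 4 * e 5)]

/-- Functionals on 3-forms that kill coboundaries and are dual to `r3`. -/
noncomputable def φ3 : Fin 6 → Module.Dual ℝ Forms :=
  ![coord [0, 1, 5] - coord [0, 3, 4],
    coord [0, 2, 4] - coord [0, 3, 4] - coord [1, 2, 3],
    coord [0, 3, 5] + coord [1, 3, 4],
    coord [0, 2, 5] - coord [0, 3, 5] - coord [1, 3, 4],
    -coord [1, 2, 5],
    coord [0, 4, 5] + coord [1, 2, 5]]

/-- Functionals on 4-forms dual to the differentials of `w3`. -/
noncomputable def ψ3 : Fin 7 → Module.Dual ℝ Forms :=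
  ![coord [0, 1, 2, 3], coord [0, 1, 3, 4], coord [0, 1, 3, 5], -coord [0, 1, 2, 4], -coord [0, 1,
      2, 5], coord [0, 2, 3, 5], coord [0, 1, 4, 5]]

variable {d : Module.End ℝ Forms} (hd : IsDifferential d)
include hd

lemma span3 : ⋀[ℝ]^3 (Fin 6 → ℝ) ≤ Submodule.span ℝ (Set.range r3) ⊔
    Submodule.map d (⋀[ℝ]^2 (Fin 6 → ℝ)) ⊔ Submodule.span ℝ (Set.range w3) := by
  set X := Submodule.span ℝ (Set.range r3) ⊔ Submodule.map d (⋀[ℝ]^2 (Fin 6 → ℝ)) ⊔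
    Submodule.span ℝ (Set.range w3) with hX
  have R (i) : r3 i ∈ X := (le_sup_left.trans le_sup_left : _ ≤ X) (Submodule.subset_span ⟨i, rfl⟩)
  have W (i) : w3 i ∈ X := (le_sup_right : _ ≤ X) (Submodule.subset_span ⟨i, rfl⟩)
  have D (i j) : d (e i * e j) ∈ X := (le_sup_right.trans le_sup_left : _ ≤ X)
    ⟨_, by simpa using list_prod_mem [i, j], rfl⟩
  -- The monomials outside `w3` are solved for one by one; each uses only those found before.
  have M013 : e 0 * (e 1 * e 3) ∈ X := by
    convert D 1 4 using 1
    simp [hd.mul, hd.e0, hd.e1, hd.e2, hd.e3, hd.e4, hd.e5, mul_add, add_mul, mul_assoc, mul_sub,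
      e_sq, e_sq_mul, e_swap, e_swap_mul]
  have M014 : e 0 * (e 1 * e 4) ∈ X := by
    convert D 1 5 using 1
    simp [hd.mul, hd.e0, hd.e1, hd.e2, hd.e3, hd.e4, hd.e5, mul_add, add_mul, mul_assoc, mul_sub,
      e_sq, e_sq_mul, e_swap, e_swap_mul]
  have M015 : e 0 * (e 1 * e 5) ∈ X := by
    convert R 0 using 1
    simp [hd.mul, hd.e0, hd.e1, hd.e2, hd.e3, hd.e4, hd.e5, mul_add, add_mul, mul_assoc, mul_sub,
      e_sq, e_sq_mul, e_swap, e_swap_mul, r3]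
  have M023 : e 0 * (e 2 * e 3) ∈ X := by
    convert D 2 4 using 1
    simp [hd.mul, hd.e0, hd.e1, hd.e2, hd.e3, hd.e4, hd.e5, mul_add, add_mul, mul_assoc, mul_sub,
      e_sq, e_sq_mul, e_swap, e_swap_mul]
  have M024 : e 0 * (e 2 * e 4) ∈ X := by
    convert R 1 using 1
    simp [hd.mul, hd.e0, hd.e1, hd.e2, hd.e3, hd.e4, hd.e5, mul_add, add_mul, mul_assoc, mul_sub,
      e_sq, e_sq_mul, e_swap, e_swap_mul, r3]
  have M012 : e 0 * (e 1 * e 2) ∈ X := by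
    convert X.neg_mem (D 2 3) using 1
    simp [hd.mul, hd.e0, hd.e1, hd.e2, hd.e3, hd.e4, hd.e5, mul_add, add_mul, mul_assoc, mul_sub,
      e_sq, e_sq_mul, e_swap, e_swap_mul]
  have M123 : e 1 * (e 2 * e 3) ∈ X := by
    convert X.sub_mem (D 2 5) M024 using 1
    simp [hd.mul, hd.e0, hd.e1, hd.e2, hd.e3, hd.e4, hd.e5, mul_add, add_mul, mul_assoc, mul_sub,
      e_sq, e_sq_mul, e_swap, e_swap_mul]
  have M034 : e 0 * (e 3 * e 4) ∈ X := by
    convert X.add_mem (X.sub_mem (D 3 5) M015) M123 using 1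
    simp [hd.mul, hd.e0, hd.e1, hd.e2, hd.e3, hd.e4, hd.e5, mul_add, add_mul, mul_assoc, mul_sub,
      e_sq, e_sq_mul, e_swap, e_swap_mul]
  have M124 : e 1 * (e 2 * e 4) ∈ X := W 0
  have M135 : e 1 * (e 3 * e 5) ∈ X := W 1
  have M145 : e 1 * (e 4 * e 5) ∈ X := W 2
  have M234 : e 2 * (e 3 * e 4) ∈ X := W 3
  have M235 : e 2 * (e 3 * e 5) ∈ X := W 4
  have M245 : e 2 * (e 4 * e 5) ∈ X := W 5
  have M345 : e 3 * (e 4 * e 5) ∈ X := W 6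
  have M025 : e 0 * (e 2 * e 5) ∈ X := by
    convert X.sub_mem (R 3) M124 using 1
    simp [hd.mul, hd.e0, hd.e1, hd.e2, hd.e3, hd.e4, hd.e5, mul_add, add_mul, mul_assoc, mul_sub,
      e_sq, e_sq_mul, e_swap, e_swap_mul, r3]
  have M035 : e 0 * (e 3 * e 5) ∈ X := by
    convert X.sub_mem (R 2) M025 using 1
    simp [hd.mul, hd.e0, hd.e1, hd.e2, hd.e3, hd.e4, hd.e5, mul_add, add_mul, mul_assoc, mul_sub,
      e_sq, e_sq_mul, e_swap, e_swap_mul, r3]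
  have M045 : e 0 * (e 4 * e 5) ∈ X := by
    convert X.add_mem (X.sub_mem (R 5) M234) M135 using 1
    simp [hd.mul, hd.e0, hd.e1, hd.e2, hd.e3, hd.e4, hd.e5, mul_add, add_mul, mul_assoc, mul_sub,
      e_sq, e_sq_mul, e_swap, e_swap_mul, r3]
    abel
  have M125 : e 1 * (e 2 * e 5) ∈ X := by
    convert X.sub_mem (X.sub_mem M045 M135) (R 4) using 1
    simp [hd.mul, hd.e0, hd.e1, hd.e2, hd.e3, hd.e4, hd.e5, mul_add, add_mul, mul_assoc, mul_sub,
      e_sq, e_sq_mul, e_swap, e_swap_mul, r3]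
  have M134 : e 1 * (e 3 * e 4) ∈ X := by
    convert X.sub_mem (X.sub_mem M035 M124) (D 4 5) using 1
    simp [hd.mul, hd.e0, hd.e1, hd.e2, hd.e3, hd.e4, hd.e5, mul_add, add_mul, mul_assoc, mul_sub,
      e_sq, e_sq_mul, e_swap, e_swap_mul]
  refine exteriorPower_three_le fun a b hab c hbc => ?_
  fin_cases a <;> fin_cases b <;> first | exact absurd hab (by decide) | skip
  all_goals fin_cases c <;> first | exact absurd hbc (by decide) | skip
  all_goals assumption

lemma ψ3_d_w3 (i j : Fin 7) : ψ3 i (d (w3 j)) = if i = j then 1 else 0 := by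
  fin_cases j
  all_goals
    simp [w3, hd.mul, hd.e0, hd.e1, hd.e2, hd.e3, hd.e4, hd.e5, mul_add, add_mul, mul_assoc,
        mul_sub,
      e_sq, e_sq_mul, e_swap, e_swap_mul]
    fin_cases i <;> simp [ψ3, coord_cons, contr_e_mul, contr_e, contr_one, coord_nil_one,
        coord_nil_e, coord_nil_e_mul]

lemma cohomology_three :
    (LinearMap.ker d ⊓ ⋀[ℝ]^3 (Fin 6 → ℝ)
      = Submodule.span ℝ (Set.range r3) ⊔ Submodule.map d (⋀[ℝ]^2 (Fin 6 → ℝ))) ∧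
    (Submodule.span ℝ (Set.range r3) ⊓ Submodule.map d (⋀[ℝ]^2 (Fin 6 → ℝ)) = ⊥) ∧
    Module.finrank ℝ (Submodule.span ℝ (Set.range r3)) = 6 := by
  refine hd.cohomology_basis 2 6 7 r3 w3 φ3 ψ3 ?_ ?_ hd.span3 ?_ ?_ ?_
  · intro i
    fin_cases i <;> simp [r3, hd.mul, hd.e0, hd.e1, hd.e2, hd.e3, hd.e4, hd.e5, mul_add, add_mul,
        mul_assoc, mul_sub,
      e_sq, e_sq_mul, e_swap, e_swap_mul]
  · have h (i j k) : e i * (e j * e k) ∈ ⋀[ℝ]^3 (Fin 6 → ℝ) := by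
      simpa using list_prod_mem [i, j, k]
    intro i
    fin_cases i <;> simp [r3, mul_assoc, h, Submodule.add_mem, Submodule.sub_mem]
  · intro i j
    fin_cases i <;> fin_cases j <;> simp [r3, φ3, mul_assoc, coord_cons, contr_e_mul, contr_e,
        contr_one, coord_nil_one, coord_nil_e, coord_nil_e_mul]
  · refine exteriorPower_two_le fun a b hab => ?_
    rw [Submodule.mem_iInf]
    intro i
    fin_cases a <;> fin_cases b <;> first | exact absurd hab (by decide) | skip
    all_goals
      simp [hd.mul, hd.e0, hd.e1, hd.e2, hd.e3, hd.e4, hd.e5, mul_add, add_mul, mul_assoc, mul_sub,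
      e_sq, e_sq_mul, e_swap, e_swap_mul]
      try (fin_cases i <;> simp [φ3, coord_cons, contr_e_mul, contr_e, contr_one, coord_nil_one,
          coord_nil_e, coord_nil_e_mul])
  · exact hd.ψ3_d_w3

end IsDifferential

/-! ### Cohomology in degree 5 -/

namespace IsDifferential

/-- Representatives of a basis of the fifth cohomology. -/
noncomputable def r5 : Fin 3 → Forms :=
  ![e 0 * e 1 * e 3 * e 4 * e 5, e 0 * e 2 * e 3 * e 4 * e 5, e 1 * e 2 * e 3 * e 4 * e 5]

lemma range_r5 : Set.range r5 = {e 0 * e 1 * e 3 * e 4 * e 5, e 0 * e 2 * e 3 * e 4 * e 5,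
    e 1 * e 2 * e 3 * e 4 * e 5} := by
  simp only [r5, Matrix.range_cons, Matrix.range_empty, Set.union_empty, Set.singleton_union]

/-- Functionals on 5-forms that kill coboundaries and are dual to `r5`. -/
noncomputable def φ5 : Fin 3 → Module.Dual ℝ Forms :=
  ![coord [0, 1, 3, 4, 5], coord [0, 2, 3, 4, 5], coord [1, 2, 3, 4, 5]]

variable {d : Module.End ℝ Forms} (hd : IsDifferential d)
include hd

lemma span5 : ⋀[ℝ]^5 (Fin 6 → ℝ) ≤ Submodule.span ℝ (Set.range r5) ⊔
    Submodule.map d (⋀[ℝ]^4 (Fin 6 → ℝ)) := by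
  set X := Submodule.span ℝ (Set.range r5) ⊔ Submodule.map d (⋀[ℝ]^4 (Fin 6 → ℝ)) with hX
  have R (i) : r5 i ∈ X := (le_sup_left : _ ≤ X) (Submodule.subset_span ⟨i, rfl⟩)
  have D (i j k l) : d (e i * (e j * (e k * e l))) ∈ X := (le_sup_right : _ ≤ X)
    ⟨_, by simpa using list_prod_mem [i, j, k, l], rfl⟩
  have M01345 : e 0 * (e 1 * (e 3 * (e 4 * e 5))) ∈ X := by
    convert R 0 using 1
    simp [r5, mul_assoc]
  have M02345 : e 0 * (e 2 * (e 3 * (e 4 * e 5))) ∈ X := by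
    convert R 1 using 1
    simp [r5, mul_assoc]
  have M12345 : e 1 * (e 2 * (e 3 * (e 4 * e 5))) ∈ X := by
    convert R 2 using 1
    simp [r5, mul_assoc]
  have M01234 : e 0 * (e 1 * (e 2 * (e 3 * e 4))) ∈ X := by
    convert D 1 2 3 5 using 1
    simp [hd.mul, hd.e0, hd.e1, hd.e2, hd.e3, hd.e4, hd.e5, mul_add, add_mul, mul_assoc, mul_sub,
      e_sq, e_sq_mul, e_swap, e_swap_mul]
  have M01235 : e 0 * (e 1 * (e 2 * (e 3 * e 5))) ∈ X := by
    convert D 1 2 4 5 using 1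
    simp [hd.mul, hd.e0, hd.e1, hd.e2, hd.e3, hd.e4, hd.e5, mul_add, add_mul, mul_assoc, mul_sub,
      e_sq, e_sq_mul, e_swap, e_swap_mul]
  have M01245 : e 0 * (e 1 * (e 2 * (e 4 * e 5))) ∈ X := by
    convert X.neg_mem (D 2 3 4 5) using 1
    simp [hd.mul, hd.e0, hd.e1, hd.e2, hd.e3, hd.e4, hd.e5, mul_add, add_mul, mul_assoc, mul_sub,
      e_sq, e_sq_mul, e_swap, e_swap_mul]
  refine exteriorPower_five_le fun a b hab c hbc k hck l hkl => ?_
  fin_cases a <;> fin_cases b <;> first | exact absurd hab (by decide) | skip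
  all_goals fin_cases c <;> first | exact absurd hbc (by decide) | skip
  all_goals fin_cases k <;> first | exact absurd hck (by decide) | skip
  all_goals fin_cases l <;> first | exact absurd hkl (by decide) | skip
  all_goals assumption

lemma φ5_d : ⋀[ℝ]^4 (Fin 6 → ℝ) ≤ ⨅ i, LinearMap.ker (φ5 i ∘ₗ d) := by
  refine exteriorPower_four_le fun a b hab c hbc k hck => ?_
  rw [Submodule.mem_iInf]
  intro i
  fin_cases a <;> fin_cases b <;> first | exact absurd hab (by decide) | skip
  all_goals fin_cases c <;> first | exact absurd hbc (by decide) | skip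
  all_goals fin_cases k <;> first | exact absurd hck (by decide) | skip
  all_goals
    simp [hd.mul, hd.e0, hd.e1, hd.e2, hd.e3, hd.e4, hd.e5, mul_add, add_mul, mul_assoc, mul_sub,
      e_sq, e_sq_mul, e_swap, e_swap_mul]
    try (fin_cases i <;> simp [φ5, coord_cons, contr_e_mul, contr_e, contr_one, coord_nil_one,
        coord_nil_e, coord_nil_e_mul])

lemma cohomology_five :
    (LinearMap.ker d ⊓ ⋀[ℝ]^5 (Fin 6 → ℝ)
      = Submodule.span ℝ (Set.range r5) ⊔ Submodule.map d (⋀[ℝ]^4 (Fin 6 → ℝ))) ∧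
    (Submodule.span ℝ (Set.range r5) ⊓ Submodule.map d (⋀[ℝ]^4 (Fin 6 → ℝ)) = ⊥) ∧
    Module.finrank ℝ (Submodule.span ℝ (Set.range r5)) = 3 := by
  -- Every 5-form is closed, so the complement of the cocycles is zero.
  refine hd.cohomology_basis 4 3 0 r5 ![] φ5 ![] ?_ ?_ (hd.span5.trans le_sup_left) ?_ hd.φ5_d
    (fun i => i.elim0)
  · intro i
    fin_cases i <;> simp [r5, hd.mul, hd.e0, hd.e1, hd.e2, hd.e3, hd.e4, hd.e5, mul_add, add_mul,
        mul_assoc, mul_sub,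
      e_sq, e_sq_mul, e_swap, e_swap_mul]
  · have h (i j k l m) : e i * (e j * (e k * (e l * e m))) ∈ ⋀[ℝ]^5 (Fin 6 → ℝ) := by
      simpa using list_prod_mem [i, j, k, l, m]
    intro i
    fin_cases i <;> simp [r5, mul_assoc, h]
  · intro i j
    fin_cases i <;> fin_cases j <;> simp [r5, φ5, mul_assoc, coord_cons, contr_e_mul, contr_e,
        contr_one, coord_nil_one, coord_nil_e, coord_nil_e_mul]

end IsDifferential

end NilpotentCE

/-- Let `g` be the 6-dimensional nilpotent Lie algebra with structure
`(0,0,0,12,14,15+23+24)`: its Chevalley–Eilenberg complex `(Λ*g*, d)` has dual basis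
`1`-forms `α₁, …, α₆` (here `α i = ι (Pi.single i 1)` in the exterior algebra of `ℝ⁶`)
with `dα₁ = dα₂ = dα₃ = 0`, `dα₄ = α₁∧α₂`, `dα₅ = α₁∧α₄`,
`dα₆ = α₁∧α₅ + α₂∧α₃ + α₂∧α₄`, and `d` a degree `+1` antiderivation (`hleib`, `hone`).
Then `H³` is 6-dimensional, spanned by the classes of `α₁₂₆`, `α₁₃₅`, `α₁₃₆+α₁₄₆`,
`α₁₃₆+α₂₃₅`, `α₁₅₆−α₂₃₆−α₂₄₆`, `α₁₅₆+α₃₄₅−α₂₄₆`, and `H⁵` is 3-dimensional, spanned by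
the classes of `α₁₂₄₅₆`, `α₁₃₄₅₆`, `α₂₃₄₅₆`.  (Concretely: cocycles = span ⊕ coboundaries
in degrees 3 and 5, the listed spans being 6- and 3-dimensional.) -/
theorem chevalley_eilenberg_H3_H5 (d : Module.End ℝ (ExteriorAlgebra ℝ (Fin 6 → ℝ)))
    (α : Fin 6 → ExteriorAlgebra ℝ (Fin 6 → ℝ))
    (hα : ∀ i, α i = ExteriorAlgebra.ι ℝ (Pi.single i (1 : ℝ)))
    (hone : d 1 = 0)
    (hleib : ∀ (v : Fin 6 → ℝ) (x : ExteriorAlgebra ℝ (Fin 6 → ℝ)),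
      d (ExteriorAlgebra.ι ℝ v * x)
        = d (ExteriorAlgebra.ι ℝ v) * x - ExteriorAlgebra.ι ℝ v * d x)
    (h1 : d (α 0) = 0) (h2 : d (α 1) = 0) (h3 : d (α 2) = 0)
    (h4 : d (α 3) = α 0 * α 1) (h5 : d (α 4) = α 0 * α 3)
    (h6 : d (α 5) = α 0 * α 4 + α 1 * α 2 + α 1 * α 3) :
    (LinearMap.ker d ⊓ (⋀[ℝ]^3 (Fin 6 → ℝ))
        = Submodule.span ℝ
            {α 0 * α 1 * α 5, α 0 * α 2 * α 4,
             α 0 * α 2 * α 5 + α 0 * α 3 * α 5,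
             α 0 * α 2 * α 5 + α 1 * α 2 * α 4,
             α 0 * α 4 * α 5 - α 1 * α 2 * α 5 - α 1 * α 3 * α 5,
             α 0 * α 4 * α 5 + α 2 * α 3 * α 4 - α 1 * α 3 * α 5} ⊔
          Submodule.map (d : ExteriorAlgebra ℝ (Fin 6 → ℝ) →ₗ[ℝ] ExteriorAlgebra ℝ (Fin 6 → ℝ))
            (⋀[ℝ]^2 (Fin 6 → ℝ))) ∧
    (Submodule.span ℝ
        {α 0 * α 1 * α 5, α 0 * α 2 * α 4,
         α 0 * α 2 * α 5 + α 0 * α 3 * α 5,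
         α 0 * α 2 * α 5 + α 1 * α 2 * α 4,
         α 0 * α 4 * α 5 - α 1 * α 2 * α 5 - α 1 * α 3 * α 5,
         α 0 * α 4 * α 5 + α 2 * α 3 * α 4 - α 1 * α 3 * α 5} ⊓
      Submodule.map (d : ExteriorAlgebra ℝ (Fin 6 → ℝ) →ₗ[ℝ] ExteriorAlgebra ℝ (Fin 6 → ℝ))
        (⋀[ℝ]^2 (Fin 6 → ℝ)) = ⊥) ∧
    finrank ℝ (Submodule.span ℝ
        {α 0 * α 1 * α 5, α 0 * α 2 * α 4,
         α 0 * α 2 * α 5 + α 0 * α 3 * α 5,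
         α 0 * α 2 * α 5 + α 1 * α 2 * α 4,
         α 0 * α 4 * α 5 - α 1 * α 2 * α 5 - α 1 * α 3 * α 5,
         α 0 * α 4 * α 5 + α 2 * α 3 * α 4 - α 1 * α 3 * α 5}) = 6 ∧
    (LinearMap.ker d ⊓ (⋀[ℝ]^5 (Fin 6 → ℝ))
        = Submodule.span ℝ
            {α 0 * α 1 * α 3 * α 4 * α 5, α 0 * α 2 * α 3 * α 4 * α 5,
             α 1 * α 2 * α 3 * α 4 * α 5} ⊔
          Submodule.map (d : ExteriorAlgebra ℝ (Fin 6 → ℝ) →ₗ[ℝ] ExteriorAlgebra ℝ (Fin 6 → ℝ))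
            (⋀[ℝ]^4 (Fin 6 → ℝ))) ∧
    (Submodule.span ℝ
        {α 0 * α 1 * α 3 * α 4 * α 5, α 0 * α 2 * α 3 * α 4 * α 5,
         α 1 * α 2 * α 3 * α 4 * α 5} ⊓
      Submodule.map (d : ExteriorAlgebra ℝ (Fin 6 → ℝ) →ₗ[ℝ] ExteriorAlgebra ℝ (Fin 6 → ℝ))
        (⋀[ℝ]^4 (Fin 6 → ℝ)) = ⊥) ∧
    finrank ℝ (Submodule.span ℝ
        {α 0 * α 1 * α 3 * α 4 * α 5, α 0 * α 2 * α 3 * α 4 * α 5,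
         α 1 * α 2 * α 3 * α 4 * α 5}) = 3 := by
  obtain rfl : α = NilpotentCE.e := funext hα
  have hd : NilpotentCE.IsDifferential d := ⟨hone, hleib, h1, h2, h3, h4, h5, h6⟩
  have H3 := hd.cohomology_three
  have H5 := hd.cohomology_five
  rw [NilpotentCE.IsDifferential.range_r3] at H3
  rw [NilpotentCE.IsDifferential.range_r5] at H5
  exact ⟨H3.1, H3.2.1, H3.2.2, H5.1, H5.2.1, H5.2.2⟩
end
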